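/- arXiv:2312.13815 — 4 statements merged into one kernel-verified Lean document; each statement's English description precedes it below -/
import Mathlib

section
/- Let λ = (λ₁,…,λ_n) be an n-tuple of integers such that the numbers ℓ_i = λ_i + n − i are pairwise distinct. Then for every integer m ≥ 1, the quantum Gelfand invariant tr_q M^m acts in the module L_q(λ) as multiplication by the scalar ∑_{k=1}^n q^{2ℓ_k m} · (∏_{j=1}^n [ℓ_j − ℓ_k + 1]_q) / (∏_{j≠k} [ℓ_j − ℓ_k]_q); that is, (tr_q M^m)·v equals this scalar times v for every v ∈ L_q(λ). The same formula also holds for m = 0. -/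
open Matrix

noncomputable section

/-- The `R`-matrix of `U_q(gl_n)` as an `n²×n²` matrix. -/
def Rmat (q : ℂ) (n : ℕ) : Matrix (Fin n × Fin n) (Fin n × Fin n) ℂ :=
  fun p r =>
    (if p = r then (if p.1 = p.2 then q else 1) else 0) +
      (if r.1 = p.2 ∧ r.2 = p.1 ∧ p.1 < p.2 then q - q⁻¹ else 0)

/-- Generators of `U_q(gl_n)`: a sign (`true` for `+`) and a pair of indices. -/
abbrev GenGL (n : ℕ) := Bool × Fin n × Fin n

/-- The generator `l^±_{ij}` in the free algebra. -/
def gl (n : ℕ) (p : Bool) (i j : Fin n) : FreeAlgebra ℂ (GenGL n) :=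
  FreeAlgebra.ι ℂ (p, i, j)

/-- Embedding of an `n×n` matrix into the first tensor leg of `End(ℂ^n)⊗End(ℂ^n)`. -/
def leg1 {n : ℕ} {A : Type*} [Semiring A] (m : Fin n → Fin n → A) :
    Matrix (Fin n × Fin n) (Fin n × Fin n) A :=
  fun v w => if v.2 = w.2 then m v.1 w.1 else 0

/-- Embedding of an `n×n` matrix into the second tensor leg of `End(ℂ^n)⊗End(ℂ^n)`. -/
def leg2 {n : ℕ} {A : Type*} [Semiring A] (m : Fin n → Fin n → A) :
    Matrix (Fin n × Fin n) (Fin n × Fin n) A :=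
  fun v w => if v.1 = w.1 then m v.2 w.2 else 0

/-- The `R`-matrix with entries in the free algebra. -/
def RcGL (q : ℂ) (n : ℕ) : Matrix (Fin n × Fin n) (Fin n × Fin n) (FreeAlgebra ℂ (GenGL n)) :=
  (Rmat q n).map (algebraMap ℂ (FreeAlgebra ℂ (GenGL n)))

/-- The defining relations of `U_q(gl_n)` in its `RTT` presentation. -/
inductive relGL (q : ℂ) (n : ℕ) :
    FreeAlgebra ℂ (GenGL n) → FreeAlgebra ℂ (GenGL n) → Prop
  | tri_minus {i j : Fin n} : i < j → relGL q n (gl n false i j) 0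
  | tri_plus {i j : Fin n} : i < j → relGL q n (gl n true j i) 0
  | diag_mp (i : Fin n) : relGL q n (gl n false i i * gl n true i i) 1
  | diag_pm (i : Fin n) : relGL q n (gl n true i i * gl n false i i) 1
  | rll (p : Bool) (v w : Fin n × Fin n) :
      relGL q n
        ((RcGL q n * leg1 (gl n p) * leg2 (gl n p)) v w)
        ((leg2 (gl n p) * leg1 (gl n p) * RcGL q n) v w)
  | rll_pm (v w : Fin n × Fin n) :
      relGL q n
        ((RcGL q n * leg1 (gl n true) * leg2 (gl n false)) v w)
        ((leg2 (gl n false) * leg1 (gl n true) * RcGL q n) v w)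

/-- The quantized enveloping algebra `U_q(gl_n)` in its `RTT` presentation. -/
abbrev UqGL (q : ℂ) (n : ℕ) := RingQuot (relGL q n)

/-- The generator `l^±_{ij}` of `U_q(gl_n)`. -/
def lG (q : ℂ) (n : ℕ) (p : Bool) (i j : Fin n) : UqGL q n :=
  RingQuot.mkAlgHom ℂ (relGL q n) (gl n p i j)

/-- The generator matrix `L^± = [l^±_{ij}]`. -/
def LM (q : ℂ) (n : ℕ) (p : Bool) : Matrix (Fin n) (Fin n) (UqGL q n) :=
  fun i j => lG q n p i j

/-- The diagonal matrix `D = diag(q^{n−1}, q^{n−3}, …, q^{−n+1})` over `A`. -/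
def Dmat (q : ℂ) (n : ℕ) (A : Type*) [Ring A] [Algebra ℂ A] : Matrix (Fin n) (Fin n) A :=
  Matrix.diagonal fun i => algebraMap ℂ A (q ^ ((n : ℤ) - 1 - 2 * (i : ℤ)))

/-- The inverse diagonal matrix `D⁻¹`. -/
def Dmatinv (q : ℂ) (n : ℕ) (A : Type*) [Ring A] [Algebra ℂ A] : Matrix (Fin n) (Fin n) A :=
  Matrix.diagonal fun i => algebraMap ℂ A (q ^ (-((n : ℤ) - 1 - 2 * (i : ℤ))))

/-- Quantum trace `tr_q X = tr(D X)`. -/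
def trq {n : ℕ} {A : Type*} [Ring A] [Algebra ℂ A] (q : ℂ) (X : Matrix (Fin n) (Fin n) A) : A :=
  Matrix.trace (Dmat q n A * X)

/-- The `q`-number `[k]_q`. -/
def qint (q : ℂ) (k : ℤ) : ℂ := (q ^ k - q ^ (-k)) / (q - q⁻¹)

end

section scal
open Finset

noncomputable def ff {ι : Type*} [DecidableEq ι] (t : ℂ) (z : ι → ℂ) (S : Finset ι) (m : ℕ) : ℂ :=
  ∑ k ∈ S, z k ^ m * ∏ j ∈ S.erase k, (z k - t * z j) / (z k - z j)

theorem ff_succ {ι : Type*} [DecidableEq ι] (t : ℂ) (z : ι → ℂ) (hz : Function.Injective z)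
    (S : Finset ι) (i : ι) (hi : i ∉ S) (m : ℕ) :
    ff t z (insert i S) (m+1) - ff t z S (m+1) = z i * (ff t z (insert i S) m - t * ff t z S m) := by
  unfold ff
  rw [sum_insert hi, sum_insert hi, Finset.erase_insert hi]
  have key : ∀ k ∈ S, ∏ j ∈ (insert i S).erase k, (z k - t * z j) / (z k - z j)
      = (z k - t * z i) / (z k - z i) * ∏ j ∈ S.erase k, (z k - t * z j) / (z k - z j) := by
    intro k hk
    have hne : i ≠ k := by rintro rfl; exact hi hk
    rw [Finset.erase_insert_of_ne hne, prod_insert (by simp [hi])]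
  have e1 : ∀ r, ∑ k ∈ S, z k ^ r * ∏ j ∈ (insert i S).erase k, (z k - t * z j) / (z k - z j)
      = ∑ k ∈ S, z k ^ r * ((z k - t * z i) / (z k - z i) * ∏ j ∈ S.erase k, (z k - t * z j) / (z k - z j)) :=
    fun r => sum_congr rfl fun k hk => by rw [key k hk]
  rw [e1, e1]
  have e2 : ∑ k ∈ S, z k ^ (m+1) * ((z k - t * z i) / (z k - z i) * ∏ j ∈ S.erase k, (z k - t * z j) / (z k - z j))
      - ∑ k ∈ S, z k ^ (m+1) * ∏ j ∈ S.erase k, (z k - t * z j) / (z k - z j)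
      = z i * (∑ k ∈ S, z k ^ m * ((z k - t * z i) / (z k - z i) * ∏ j ∈ S.erase k, (z k - t * z j) / (z k - z j))
      - t * ∑ k ∈ S, z k ^ m * ∏ j ∈ S.erase k, (z k - t * z j) / (z k - z j)) := by
    rw [mul_sum, ← sum_sub_distrib, ← sum_sub_distrib, mul_sum]
    refine sum_congr rfl fun k hk => ?_
    have hne : z k - z i ≠ 0 := sub_ne_zero.2 fun h => hi (hz h ▸ hk)
    generalize ∏ j ∈ S.erase k, (z k - t * z j) / (z k - z j) = P
    field_simp
    ring
  linear_combination e2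

theorem ff_zero {ι : Type*} [DecidableEq ι] (t : ℂ) (z : ι → ℂ) (hz : Function.Injective z)
    (hz0 : ∀ i, z i ≠ 0) (S : Finset ι) : (t - 1) * ff t z S 0 = t ^ S.card - 1 := by
  classical
  let v : Option ι → ℂ := fun o => o.elim 0 z
  have hv : Function.Injective v := by
    rintro (_|a) (_|b) h
    · rfl
    · exact absurd h.symm (hz0 b)
    · exact absurd h (hz0 a)
    · exact congrArg some (hz h)
  let P : Polynomial ℂ := ∏ j ∈ S, (Polynomial.X - Polynomial.C (t * z j))
  have hP : P.Monic := Polynomial.monic_prod_of_monic _ _ fun j _ => Polynomial.monic_X_sub_C _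
  have hd : P.degree = S.card := by
    rw [Polynomial.degree_prod, sum_congr rfl fun j _ => Polynomial.degree_X_sub_C (t * z j)]; simp
  have hnm : (none : Option ι) ∉ S.map Function.Embedding.some := by simp
  have h := Lagrange.leadingCoeff_eq_sum (s := insert none (S.map Function.Embedding.some))
    (v := v) (hv.injOn) (P := P) (by rw [hd, card_insert_of_notMem hnm]; simp)
  rw [hP.leadingCoeff, sum_insert hnm, sum_map, erase_insert hnm, prod_map] at h
  have h0 : Polynomial.eval (v none) P / ∏ j ∈ S, (v none - v (Function.Embedding.some j)) = t ^ S.card := by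
    rw [Polynomial.eval_prod, ← prod_div_distrib, ← prod_const]
    refine prod_congr rfl fun j _ => ?_
    have := hz0 j
    simp [v]
    field_simp
  have hk : ∀ k ∈ S, Polynomial.eval (v (Function.Embedding.some k)) P
      / ∏ j ∈ (insert none (S.map Function.Embedding.some)).erase (Function.Embedding.some k),
          (v (Function.Embedding.some k) - v j)
      = (1 - t) * (z k ^ 0 * ∏ j ∈ S.erase k, (z k - t * z j) / (z k - z j)) := by
    intro k hk
    have e : (insert none (S.map Function.Embedding.some)).erase (Function.Embedding.some k)
        = insert none ((S.erase k).map Function.Embedding.some) := by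
      ext o; cases o <;> simp
    have hz0k := hz0 k
    rw [e, prod_insert (by simp), prod_map, Polynomial.eval_prod, ← mul_prod_erase S _ hk, prod_div_distrib]
    simp [v]
    rw [mul_div_mul_comm]
    congr 1
    field_simp
  rw [h0, sum_congr rfl hk, ← mul_sum] at h
  unfold ff
  linear_combination h

theorem ysum (n : ℕ) (b : Fin n → ℂ) (g : ℕ → ℂ) (hg : g n = 0)
    (h : ∀ i : Fin n, g i - g (i+1) = b i) (i : ℕ) (hi : i ≤ n) :
    ∑ k ∈ univ.filter (fun k : Fin n => i ≤ k), b k = g i := by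
  induction hi using Nat.decreasingInduction with
  | self => rw [hg]; apply sum_eq_zero; intro k hk; simp at hk; omega
  | of_succ k hk ih =>
    have : univ.filter (fun x : Fin n => k ≤ x) = insert ⟨k, hk⟩ (univ.filter (fun x : Fin n => k + 1 ≤ x)) := by
      ext x; simp [Fin.ext_iff]; omega
    rw [this, sum_insert (by simp), ih, ← h ⟨k, hk⟩]; simp

noncomputable def yy (n : ℕ) (t : ℂ) (mu : Fin n → ℂ) : ℕ → Fin n → ℂ
  | 0, _ => 1
  | m+1, i => mu i * (t ^ (n - 1 - (i:ℕ)) * yy n t mu m i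
      - (t - 1) * ∑ k ∈ univ.filter (fun k : Fin n => i < k), t ^ (n - 1 - (k:ℕ)) * yy n t mu m k)

theorem yy_sum (n : ℕ) (t : ℂ) (ht : t ≠ 1) (mu : Fin n → ℂ) (z : Fin n → ℂ)
    (hzm : ∀ i : Fin n, z i = t ^ (n - 1 - (i:ℕ)) * mu i) (hz : Function.Injective z)
    (hz0 : ∀ i, z i ≠ 0) (m : ℕ) (i : ℕ) (hi : i ≤ n) :
    ∑ k ∈ univ.filter (fun k : Fin n => i ≤ k), t ^ (n - 1 - (k:ℕ)) * yy n t mu m k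
      = ff t z (univ.filter (fun k : Fin n => i ≤ k)) m := by
  have hcard : ∀ i ≤ n, (univ.filter (fun k : Fin n => i ≤ k)).card = n - i := by
    intro i hi
    have := ysum n (fun _ => 1) (fun i => (n:ℂ) - i) (by simp) (by intro i; push_cast; ring) i hi
    simp only [sum_const, nsmul_eq_mul, mul_one] at this
    have h2 : ((univ.filter (fun k : Fin n => i ≤ k)).card : ℂ) = ((n - i : ℕ) : ℂ) := by
      rw [this]; push_cast [hi]; ring
    exact_mod_cast h2
  have hins : ∀ i : Fin n, univ.filter (fun k : Fin n => (i:ℕ) ≤ k)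
      = insert i (univ.filter (fun k : Fin n => (i:ℕ) + 1 ≤ k)) := by
    intro i; ext x; simp [Fin.ext_iff]; omega
  have hemp : univ.filter (fun k : Fin n => n ≤ k) = ∅ := by
    ext x; simp
  induction m generalizing i with
  | zero =>
    apply ysum n _ (fun i => ff t z (univ.filter (fun k : Fin n => i ≤ k)) 0) _ _ i hi
    · simp [hemp, ff]
    · intro i
      have h1 := ff_zero t z hz hz0 (univ.filter (fun k : Fin n => (i:ℕ) ≤ k))
      have h2 := ff_zero t z hz hz0 (univ.filter (fun k : Fin n => (i:ℕ)+1 ≤ k))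
      rw [hcard _ (by omega)] at h1 h2
      have h3 : n - (i:ℕ) = (n - 1 - i) + 1 := by omega
      have h4 : n - ((i:ℕ)+1) = (n - 1 - i) := by omega
      rw [h3, pow_succ] at h1
      rw [h4] at h2
      simp only [yy]
      apply mul_left_cancel₀ (sub_ne_zero.2 ht)
      linear_combination h1 - h2
  | succ m ih =>
    apply ysum n _ (fun i => ff t z (univ.filter (fun k : Fin n => i ≤ k)) (m+1)) _ _ i hi
    · simp [hemp, ff]
    · intro i
      have h1 := ff_succ t z hz (univ.filter (fun k : Fin n => (i:ℕ)+1 ≤ k)) i (by simp) m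
      have hi1 := ih i (by omega)
      have hi2 := ih (i+1) (by omega)
      rw [hins i, h1, ← hi2, ← hins i, ← hi1, hins i, sum_insert (by simp)]
      simp only [yy]
      have : univ.filter (fun k : Fin n => (i:ℕ) + 1 ≤ k) = univ.filter (fun k : Fin n => i < k) := by
        ext x; simp
      rw [this, hzm i]
      ring

theorem final_scal (n : ℕ) (q : ℂ) (hq0 : q ≠ 0)
    (hq : ∀ k : ℕ, k ≠ 0 → q ^ k ≠ 1)
    (lam : Fin n → ℤ) (ell : Fin n → ℤ)
    (hell : ∀ i : Fin n, ell i = lam i + (n : ℤ) - 1 - (i : ℤ))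
    (hdist : Function.Injective ell) (m : ℕ) :
    ∑ i : Fin n, q ^ ((n : ℤ) - 1 - 2 * (i : ℤ)) * yy n (q^2) (fun i => q ^ (2 * lam i)) m i
     = ∑ k : Fin n, q ^ (2 * ell k * (m : ℤ)) *
          ((∏ j : Fin n, qint q (ell j - ell k + 1)) /
            (∏ j ∈ Finset.univ.erase k, qint q (ell j - ell k))) := by
  have hzq : ∀ k : ℤ, q ^ k = 1 → k = 0 := by
    intro k hk
    by_contra h0
    rcases Int.natAbs_eq k with h | h
    · rw [h] at hk; exact hq k.natAbs (by omega) (by exact_mod_cast hk)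
    · rw [h, _root_.zpow_neg, inv_eq_one] at hk; exact hq k.natAbs (by omega) (by exact_mod_cast hk)
  have hzinj : Function.Injective (fun i => q ^ (2 * ell i)) := by
    intro a b h
    simp only at h
    have : q ^ (2 * ell a - 2 * ell b) = 1 := by
      rw [zpow_sub₀ hq0, h, div_self (zpow_ne_zero _ hq0)]
    have := hzq _ this
    exact hdist (by omega)
  have hz0 : ∀ i, (fun i => q ^ (2 * ell i)) i ≠ 0 := fun i => zpow_ne_zero _ hq0
  have h := yy_sum n (q^2) (hq 2 (by simp)) (fun i => q ^ (2 * lam i)) (fun i => q ^ (2 * ell i)) (by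
    intro i
    rw [← pow_mul, ← zpow_natCast _ (2 * _), ← zpow_add₀ hq0]
    congr 1
    have := hell i
    have := i.2
    push_cast
    omega) hzinj hz0 m 0 (by omega)
  simp only [Nat.zero_le, filter_true] at h
  have hl : ∑ i : Fin n, q ^ ((n : ℤ) - 1 - 2 * (i : ℤ)) * yy n (q^2) (fun i => q ^ (2 * lam i)) m i
     = q ^ (1 - (n:ℤ)) * ∑ k : Fin n, (q ^ 2) ^ (n - 1 - (k:ℕ)) * yy n (q^2) (fun i => q ^ (2 * lam i)) m k := by
    rw [mul_sum]
    refine sum_congr rfl fun i _ => ?_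
    rw [← mul_assoc, ← pow_mul, ← zpow_natCast _ (2 * _), ← zpow_add₀ hq0]
    congr 2
    have := i.2
    push_cast
    omega
  rw [hl, h, ff, mul_sum]
  refine sum_congr rfl fun k _ => ?_
  have hqq : q - q⁻¹ ≠ 0 := by
    intro h
    apply hq 2 (by simp)
    field_simp at h
    linear_combination h
  have h1 : ∏ j : Fin n, qint q (ell j - ell k + 1) = ∏ j ∈ univ.erase k, qint q (ell j - ell k + 1) := by
    rw [← mul_prod_erase univ _ (mem_univ k)]
    simp [qint, div_self hqq]
  rw [h1, ← prod_div_distrib]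
  have h2 : q ^ (1 - (n:ℤ)) = ∏ j ∈ univ.erase k, q⁻¹ := by
    have := k.2
    rw [prod_const, card_erase_of_mem (mem_univ _), card_univ, Fintype.card_fin, inv_pow, ← zpow_natCast, ← _root_.zpow_neg]
    congr 1
    omega
  rw [h2, mul_left_comm, ← prod_mul_distrib, _root_.zpow_mul _ (2 * ell k), zpow_natCast]
  congr 1
  refine prod_congr rfl fun j hj => ?_
  have hjk : j ≠ k := (mem_erase.1 hj).1
  have hne : q ^ (2 * ell k) - q ^ (2 * ell j) ≠ 0 := sub_ne_zero.2 fun h => hjk (hzinj h.symm)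
  have hk0 : q ^ ell k ≠ 0 := zpow_ne_zero _ hq0
  have hj0 : q ^ ell j ≠ 0 := zpow_ne_zero _ hq0
  unfold qint
  rw [div_div_div_cancel_right₀ hqq]
  rw [mul_comm 2 (ell k), mul_comm 2 (ell j), _root_.zpow_mul, _root_.zpow_mul] at hne ⊢
  have e1 : -(ell j - ell k + 1) = ell k - ell j - 1 := by ring
  have e2 : -(ell j - ell k) = ell k - ell j := by ring
  rw [e1, e2]
  simp only [zpow_add₀ hq0, zpow_sub₀ hq0, zpow_one]
  generalize q ^ ell k = x at *
  generalize q ^ ell j = y at *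
  have hne2 : x^2 - y^2 ≠ 0 := by exact_mod_cast hne
  have hne3 : y^2 - x^2 ≠ 0 := by intro h; apply hne2; linear_combination -h
  have : y / x - x / y ≠ 0 := by
    intro h; apply hne3; field_simp at h; linear_combination h
  have e3 : x ^ (2:ℤ) = x^2 := by norm_cast
  have e4 : y ^ (2:ℤ) = y^2 := by norm_cast
  rw [e3, e4]
  field_simp
  ring
end scal
section alg
set_option linter.unusedSectionVars false
set_option linter.unusedSimpArgs false
open Finset

theorem tele_aux (n : ℕ) (q : ℂ) (hq0 : q ≠ 0) (d b : ℕ) (hdb : d + 1 ≤ b) (hb : b ≤ n) :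
    ∑ a : Fin n, (if d < (a:ℕ) ∧ (a:ℕ) < b then (q - q⁻¹) * q ^ ((n:ℤ) - 1 - 2 * (a:ℤ)) else 0)
      = q ^ ((n:ℤ) - 2 - 2 * (d:ℤ)) - q ^ ((n:ℤ) - 2 * (b:ℤ)) := by
  induction b, hdb using Nat.le_induction with
  | base =>
    rw [sum_eq_zero]
    · have : (n:ℤ) - 2 * ((d+1 : ℕ):ℤ) = n - 2 - 2 * d := by push_cast; ring
      rw [this, sub_self]
    · intro a _
      rw [if_neg (by omega)]
  | succ b hdb ih =>
    have ih := ih (by omega)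
    have e : ∀ a : Fin n, (if d < (a:ℕ) ∧ (a:ℕ) < b + 1 then (q - q⁻¹) * q ^ ((n:ℤ) - 1 - 2 * (a:ℤ)) else 0)
        = (if d < (a:ℕ) ∧ (a:ℕ) < b then (q - q⁻¹) * q ^ ((n:ℤ) - 1 - 2 * (a:ℤ)) else 0)
          + (if a = ⟨b, hb⟩ then (q - q⁻¹) * q ^ ((n:ℤ) - 1 - 2 * (b:ℤ)) else 0) := by
      intro a
      by_cases h : a = ⟨b, hb⟩
      · subst h
        simp
        omega
      · have : (a:ℕ) ≠ b := fun h' => h (Fin.ext h')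
        rw [if_neg h, add_zero]
        congr 1
        simp only [eq_iff_iff]
        omega
    rw [sum_congr rfl fun a _ => e a, sum_add_distrib, ih, sum_ite_eq' univ, if_pos (mem_univ _)]
    have h1 : (n:ℤ) - 1 - 2 * (b:ℤ) = (n - 2 * b) - 1 := by ring
    have h2 : (n:ℤ) - 2 * ((b+1 : ℕ):ℤ) = (n - 2 * b) - 1 - 1 := by push_cast; ring
    rw [h1, h2, zpow_sub_one₀ hq0 ((n:ℤ) - 2 * b - 1), zpow_sub_one₀ hq0]
    generalize q ^ ((n:ℤ) - 2 * b) = x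
    generalize q ^ ((n:ℤ) - 2 - 2 * d) = y
    field_simp
    ring

theorem tele (n : ℕ) (q : ℂ) (hq0 : q ≠ 0) (d b : Fin n) :
    ∑ a : Fin n, q ^ ((n:ℤ) - 1 - 2 * (a:ℤ)) *
      ((if a = b ∧ d < b then - q * (q - q⁻¹) else 0) + (if a = d ∧ d < b then q⁻¹ * (q - q⁻¹) else 0)
        - (if d < a ∧ a < b then (q - q⁻¹)^2 else 0)) = 0 := by
  by_cases hdb : d < b
  · simp only [hdb, and_true]
    have h := tele_aux n q hq0 d b hdb (by omega)
    simp only [mul_sub, mul_add, sum_sub_distrib, sum_add_distrib, mul_ite, mul_zero, sum_ite_eq', sum_ite_eq, mem_univ, if_true]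
    have e : ∑ x : Fin n, (if d < x ∧ x < b then q ^ ((n:ℤ) - 1 - 2 * (x:ℤ)) * (q - q⁻¹)^2 else 0)
       = (q - q⁻¹) * ∑ a : Fin n, (if (d:ℕ) < (a:ℕ) ∧ (a:ℕ) < b then (q - q⁻¹) * q ^ ((n:ℤ) - 1 - 2 * (a:ℤ)) else 0) := by
      rw [mul_sum]
      refine sum_congr rfl fun a _ => ?_
      simp only [Fin.val_fin_lt, mul_ite, mul_zero]
      congr 1
      ring
    rw [e, h]
    have h1 : (n:ℤ) - 1 - 2 * (b:ℤ) = (n - 2 * b) - 1 := by ring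
    have h2 : (n:ℤ) - 1 - 2 * (d:ℤ) = (n - 2 - 2 * d) + 1 := by ring
    rw [h1, h2, zpow_sub_one₀ hq0, zpow_add_one₀ hq0]
    field_simp
    ring
  · apply sum_eq_zero
    intro a _
    rw [if_neg (by tauto), if_neg (by tauto), if_neg (by rintro ⟨h, h'⟩; exact hdb (h.trans h'))]
    simp

variable {n : ℕ} {A : Type*} [Ring A] [Algebra ℂ A]

noncomputable def RA (q : ℂ) (n : ℕ) (A : Type*) [Ring A] [Algebra ℂ A] :
    Matrix (Fin n × Fin n) (Fin n × Fin n) A := (Rmat q n).map (algebraMap ℂ A)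

noncomputable def SA (q : ℂ) (n : ℕ) (A : Type*) [Ring A] [Algebra ℂ A] :
    Matrix (Fin n × Fin n) (Fin n × Fin n) A := (RA q n A).submatrix Prod.swap Prod.swap

theorem RA_mul (q : ℂ) (X : Matrix (Fin n × Fin n) (Fin n × Fin n) A) (a b : Fin n) (w : Fin n × Fin n) :
    (RA q n A * X) (a, b) w = (if a = b then q else 1) • X (a, b) w
      + (if a < b then (q - q⁻¹) • X (b, a) w else 0) := by
  have e : ∀ r : Fin n × Fin n, RA q n A (a, b) r * X r w =
      (if (a,b) = r then (if a = b then q else 1) • X r w else 0)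
      + (if (b,a) = r then (if a < b then (q - q⁻¹) • X r w else 0) else 0) := by
    rintro ⟨c, d⟩
    simp only [RA, Rmat, Matrix.map_apply, map_add, add_mul, ← Algebra.smul_def, ite_smul, zero_smul]
    congr 1
    by_cases h : a < b <;> simp [h, eq_comm]
  rw [Matrix.mul_apply, sum_congr rfl fun r _ => e r, sum_add_distrib]
  simp

theorem mul_RA (q : ℂ) (X : Matrix (Fin n × Fin n) (Fin n × Fin n) A) (c d : Fin n) (v : Fin n × Fin n) :
    (X * RA q n A) v (c, d) = (if c = d then q else 1) • X v (c, d)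
      + (if d < c then (q - q⁻¹) • X v (d, c) else 0) := by
  have e : ∀ r : Fin n × Fin n, X v r * RA q n A r (c, d) =
      (if r = (c,d) then (if c = d then q else 1) • X v r else 0)
      + (if r = (d,c) then (if d < c then (q - q⁻¹) • X v r else 0) else 0) := by
    rintro ⟨a, b⟩
    rw [RA, Matrix.map_apply, ← Algebra.commutes]
    simp only [Rmat, map_add, add_mul, ← Algebra.smul_def, ite_smul, zero_smul]
    congr 1
    · by_cases h : (a, b) = (c, d)
      · obtain ⟨rfl, rfl⟩ := Prod.mk.inj h; simp
      · simp [h]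
    · by_cases h : (a, b) = (d, c)
      · obtain ⟨rfl, rfl⟩ := Prod.mk.inj h; simp
      · rw [if_neg h, if_neg]
        rintro ⟨rfl, rfl, _⟩; exact h rfl
  rw [Matrix.mul_apply, sum_congr rfl fun r _ => e r, sum_add_distrib]
  simp

theorem SA_mul (q : ℂ) (X : Matrix (Fin n × Fin n) (Fin n × Fin n) A) (a b : Fin n) (w : Fin n × Fin n) :
    (SA q n A * X) (a, b) w = (if a = b then q else 1) • X (a, b) w
      + (if b < a then (q - q⁻¹) • X (b, a) w else 0) := by
  have h : SA q n A * X = (RA q n A * X.submatrix Prod.swap id).submatrix Prod.swap id := by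
    have := Matrix.submatrix_mul_equiv (RA q n A) (X.submatrix Prod.swap id) Prod.swap (Equiv.prodComm (Fin n) (Fin n)) id
    rw [← this]
    congr 1
  rw [h, Matrix.submatrix_apply, Prod.swap_prod_mk, RA_mul]
  simp [eq_comm]

theorem mul_SA (q : ℂ) (X : Matrix (Fin n × Fin n) (Fin n × Fin n) A) (c d : Fin n) (v : Fin n × Fin n) :
    (X * SA q n A) v (c, d) = (if c = d then q else 1) • X v (c, d)
      + (if c < d then (q - q⁻¹) • X v (d, c) else 0) := by
  have h : X * SA q n A = (X.submatrix id Prod.swap * RA q n A).submatrix id Prod.swap := by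
    have := Matrix.submatrix_mul_equiv (X.submatrix id Prod.swap) (RA q n A) id (Equiv.prodComm (Fin n) (Fin n)) Prod.swap
    rw [← this]
    congr 1
  rw [h, Matrix.submatrix_apply, Prod.swap_prod_mk, mul_RA]
  simp [eq_comm]

theorem RA_inv (q : ℂ) (hq0 : q ≠ 0) : RA q n A * RA q⁻¹ n A = 1 := by
  ext ⟨a, b⟩ ⟨c, d⟩
  rw [RA_mul]
  have h1 : ∀ a b c d : Fin n, RA q⁻¹ n A (a,b) (c,d) = ((1 : Matrix (Fin n × Fin n) (Fin n × Fin n) A) * RA q⁻¹ n A) (a,b) (c,d) := by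
    intros; rw [one_mul]
  rw [h1, h1, mul_RA, mul_RA]
  simp only [Matrix.one_apply, Prod.mk.injEq, inv_inv]
  rcases lt_trichotomy a b with h | h | h
  · have hn := h.not_gt
    have hne := h.ne
    by_cases h3 : a = c ∧ b = d
    · obtain ⟨rfl, rfl⟩ := h3
      simp [hn, hne, hne.symm, h]
    · by_cases h4 : a = d ∧ b = c
      · obtain ⟨rfl, rfl⟩ := h4
        simp [hn, hne, hne.symm, h]
        rw [← add_smul]; simp
      · have h5 : ¬ (b = d ∧ a = c) := by tauto
        have h6 : ¬ (b = c ∧ a = d) := by tauto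
        simp [h3, h4, h5, h6]
  · subst h
    by_cases h3 : a = c ∧ a = d
    · obtain ⟨rfl, rfl⟩ := h3
      simp [hq0]
    · have h5 : ¬ (a = d ∧ a = c) := by tauto
      simp [h3, h5]
  · have hn := h.not_gt
    have hne := h.ne'
    by_cases h3 : a = c ∧ b = d
    · obtain ⟨rfl, rfl⟩ := h3
      simp [hn, hne, hne.symm]
    · by_cases h4 : a = d ∧ b = c
      · obtain ⟨rfl, rfl⟩ := h4
        simp [hn, hne, hne.symm]
      · simp [h3, h4, hn]

theorem RA_inv' (q : ℂ) (hq0 : q ≠ 0) : RA q⁻¹ n A * RA q n A = 1 := by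
  have := RA_inv (n := n) (A := A) q⁻¹ (inv_ne_zero hq0)
  rwa [inv_inv] at this

theorem SA_inv' (q : ℂ) (hq0 : q ≠ 0) : SA q⁻¹ n A * SA q n A = 1 := by
  have := Matrix.submatrix_mul_equiv (RA q⁻¹ n A) (RA q n A) Prod.swap (Equiv.prodComm (Fin n) (Fin n)) Prod.swap
  rw [RA_inv' q hq0] at this
  have h2 : SA q⁻¹ n A * SA q n A = (1 : Matrix (Fin n × Fin n) (Fin n × Fin n) A).submatrix Prod.swap Prod.swap := this
  rw [h2]
  exact Matrix.submatrix_one _ Prod.swap_injective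

theorem leg1_mul (X Y : Matrix (Fin n) (Fin n) A) : leg1 (X * Y) = leg1 X * leg1 Y := by
  ext ⟨a, b⟩ ⟨c, d⟩
  simp only [leg1, Matrix.mul_apply, Fintype.sum_prod_type, ite_mul, zero_mul, mul_ite, mul_zero]
  by_cases h : b = d <;> simp [h]

theorem leg1_one : leg1 (1 : Matrix (Fin n) (Fin n) A) = 1 := by
  ext ⟨a, b⟩ ⟨c, d⟩
  simp only [leg1, Matrix.one_apply, Prod.mk.injEq]
  by_cases h : b = d <;> simp [h]

theorem leg1_pow (X : Matrix (Fin n) (Fin n) A) (m : ℕ) : leg1 (X ^ m) = leg1 X ^ m := by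
  induction m with
  | zero => simp [leg1_one]
  | succ m ih => rw [pow_succ, leg1_mul, ih, pow_succ]

theorem mul_leg2 (X : Matrix (Fin n × Fin n) (Fin n × Fin n) A) (L : Matrix (Fin n) (Fin n) A)
    (v : Fin n × Fin n) (c d : Fin n) :
    (X * leg2 L) v (c, d) = ∑ y, X v (c, y) * L y d := by
  simp only [leg2, Matrix.mul_apply, Fintype.sum_prod_type, mul_ite, mul_zero]
  rw [sum_comm]
  simp

theorem leg2_mul_leg1 (L Y : Matrix (Fin n) (Fin n) A) (a b c d : Fin n) :
    (leg2 L * leg1 Y) (a, b) (c, d) = L b d * Y a c := by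
  simp only [leg2, leg1, Matrix.mul_apply, Fintype.sum_prod_type, ite_mul, zero_mul, mul_ite, mul_zero]
  simp

theorem trq_eq (q : ℂ) (Y : Matrix (Fin n) (Fin n) A) :
    trq q Y = ∑ i : Fin n, q ^ ((n:ℤ) - 1 - 2 * (i:ℤ)) • Y i i := by
  simp [trq, Dmat, Matrix.trace, Algebra.smul_def]

theorem ptr_R (q : ℂ) (hq0 : q ≠ 0) (Y : Matrix (Fin n) (Fin n) A) (b d : Fin n) :
    ∑ a : Fin n, q ^ ((n:ℤ) - 1 - 2 * (a:ℤ)) • (RA q n A * (leg1 Y * RA q⁻¹ n A)) (a, b) (a, d)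
      = if b = d then trq q Y else 0 := by
  by_cases hbd : b = d
  · subst hbd
    rw [if_pos rfl, trq_eq]
    refine sum_congr rfl fun a _ => ?_
    congr 1
    rw [RA_mul, mul_RA, mul_RA]
    simp only [leg1]
    rcases lt_trichotomy a b with h | h | h
    · simp [h, h.ne, h.not_gt]
    · subst h; simp [smul_smul, hq0]
    · simp [h, h.ne', h.ne, h.not_gt]
  · rw [if_neg hbd]
    have e : ∀ a : Fin n, q ^ ((n:ℤ) - 1 - 2 * (a:ℤ)) • (RA q n A * (leg1 Y * RA q⁻¹ n A)) (a, b) (a, d)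
       = (q ^ ((n:ℤ) - 1 - 2 * (a:ℤ)) *
      ((if a = b ∧ d < b then - q * (q - q⁻¹) else 0) + (if a = d ∧ d < b then q⁻¹ * (q - q⁻¹) else 0)
        - (if d < a ∧ a < b then (q - q⁻¹)^2 else 0))) • Y b d := by
      intro a
      rw [mul_smul]
      congr 1
      rw [RA_mul, mul_RA, mul_RA]
      simp only [leg1, if_neg hbd, inv_inv]
      by_cases hab : a = b
      · subst hab
        by_cases hda : d < a
        · simp [hda, hbd, smul_smul]
          module
        · simp [hda]
      · by_cases had : a = d
        · subst had
          by_cases hb : a < b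
          · simp [hab, hb, smul_smul, mul_comm]
          · simp [hb]
        · by_cases h1 : a < b
          · by_cases h2 : d < a
            · simp [hab, Ne.symm hab, had, h1, h2, smul_smul]
              module
            · simp [hab, had, h1, h2]
          · have : b ≠ a := Ne.symm hab
            simp [hab, had, h1, this]
    rw [sum_congr rfl fun a _ => e a, ← sum_smul, tele n q hq0, zero_smul]

theorem ptr_S (q : ℂ) (hq0 : q ≠ 0) (Y : Matrix (Fin n) (Fin n) A) (b d : Fin n) :
    ∑ a : Fin n, q ^ ((n:ℤ) - 1 - 2 * (a:ℤ)) • (SA q⁻¹ n A * (leg1 Y * SA q n A)) (a, b) (a, d)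
      = if b = d then trq q Y else 0 := by
  by_cases hbd : b = d
  · subst hbd
    rw [if_pos rfl, trq_eq]
    refine sum_congr rfl fun a _ => ?_
    congr 1
    rw [SA_mul, mul_SA, mul_SA]
    simp only [leg1]
    rcases lt_trichotomy a b with h | h | h
    · simp [h, h.ne, h.ne', h.not_gt]
    · subst h; simp [smul_smul, hq0]
    · simp [h, h.ne', h.ne, h.not_gt]
  · rw [if_neg hbd]
    have e : ∀ a : Fin n, q ^ ((n:ℤ) - 1 - 2 * (a:ℤ)) • (SA q⁻¹ n A * (leg1 Y * SA q n A)) (a, b) (a, d)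
       = (q ^ ((n:ℤ) - 1 - 2 * (a:ℤ)) *
      ((if a = d ∧ b < d then - q * (q - q⁻¹) else 0) + (if a = b ∧ b < d then q⁻¹ * (q - q⁻¹) else 0)
        - (if b < a ∧ a < d then (q - q⁻¹)^2 else 0))) • Y b d := by
      intro a
      rw [mul_smul]
      congr 1
      rw [SA_mul, mul_SA, mul_SA]
      simp only [leg1, if_neg hbd, inv_inv]
      by_cases hab : a = b
      · subst hab
        by_cases hda : a < d
        · simp [hda, hbd, smul_smul]
        · simp [hda]
      · by_cases had : a = d
        · subst had
          by_cases hb : b < a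
          · simp [hab, hb, smul_smul]
            module
          · simp [hb, hab]
        · by_cases h1 : b < a
          · by_cases h2 : a < d
            · simp [hab, Ne.symm hab, had, h1, h2, smul_smul]
              module
            · simp [hab, had, h1, h2]
          · have : b ≠ a := Ne.symm hab
            simp [hab, had, h1, this]
    rw [sum_congr rfl fun a _ => e a, ← sum_smul, tele n q hq0, zero_smul]

theorem central_aux (q : ℂ) (Q Qi : Matrix (Fin n × Fin n) (Fin n × Fin n) A) (hQ : Q * Qi = 1)
    (Y L : Matrix (Fin n) (Fin n) A)
    (hp : ∀ b d : Fin n, ∑ a : Fin n, q ^ ((n:ℤ) - 1 - 2 * (a:ℤ)) • (Q * (leg1 Y * Qi)) (a, b) (a, d)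
      = if b = d then trq q Y else 0)
    (hc : Commute (Qi * leg2 L) (leg1 Y)) (b d : Fin n) :
    L b d * trq q Y = trq q Y * L b d := by
  have h1 : leg2 L * leg1 Y = Q * (leg1 Y * Qi) * leg2 L := by
    calc leg2 L * leg1 Y = (Q * Qi) * (leg2 L * leg1 Y) := by rw [hQ, one_mul]
      _ = Q * ((Qi * leg2 L) * leg1 Y) := by simp only [mul_assoc]
      _ = _ := by rw [hc.eq]; simp only [mul_assoc]
  have h2 : L b d * trq q Y = ∑ a : Fin n, q ^ ((n:ℤ) - 1 - 2 * (a:ℤ)) • (leg2 L * leg1 Y) (a, b) (a, d) := by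
    rw [trq_eq, mul_sum]
    refine sum_congr rfl fun a _ => ?_
    rw [leg2_mul_leg1, mul_smul_comm]
  rw [h2, h1]
  simp only [mul_leg2, smul_sum]
  rw [sum_comm]
  simp only [← smul_mul_assoc, ← sum_mul, hp]
  simp
end alg
section main
open Finset
set_option linter.unusedSimpArgs false

variable {n : ℕ}

theorem rel_mat (q : ℂ) (p p' : Bool)
    (h : ∀ v w, relGL q n ((RcGL q n * leg1 (gl n p) * leg2 (gl n p')) v w)
        ((leg2 (gl n p') * leg1 (gl n p) * RcGL q n) v w)) :
    RA q n (UqGL q n) * leg1 (LM q n p) * leg2 (LM q n p')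
      = leg2 (LM q n p') * leg1 (LM q n p) * RA q n (UqGL q n) := by
  have hR : (RcGL q n).map (RingQuot.mkAlgHom ℂ (relGL q n)) = RA q n (UqGL q n) := by
    ext v w
    simp [RcGL, RA]
  have h1 : ∀ p, (leg1 (gl n p)).map (RingQuot.mkAlgHom ℂ (relGL q n)) = leg1 (LM q n p) := by
    intro p; ext v w
    simp only [leg1, Matrix.map_apply, LM, lG]
    split_ifs <;> simp
  have h2 : ∀ p, (leg2 (gl n p)).map (RingQuot.mkAlgHom ℂ (relGL q n)) = leg2 (LM q n p) := by
    intro p; ext v w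
    simp only [leg2, Matrix.map_apply, LM, lG]
    split_ifs <;> simp
  have h3 : (RcGL q n * leg1 (gl n p) * leg2 (gl n p')).map (RingQuot.mkAlgHom ℂ (relGL q n))
      = (leg2 (gl n p') * leg1 (gl n p) * RcGL q n).map (RingQuot.mkAlgHom ℂ (relGL q n)) := by
    ext v w
    exact RingQuot.mkAlgHom_rel ℂ (h v w)
  rwa [Matrix.map_mul, Matrix.map_mul, Matrix.map_mul, Matrix.map_mul, hR, h1, h2] at h3

theorem swap_rel {A : Type*} [Ring A] [Algebra ℂ A] (q : ℂ) (X Y : Matrix (Fin n) (Fin n) A)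
    (h : RA q n A * leg1 X * leg2 Y = leg2 Y * leg1 X * RA q n A) :
    SA q n A * leg2 X * leg1 Y = leg1 Y * leg2 X * SA q n A := by
  have h' := congrArg (fun Z => Z.submatrix Prod.swap Prod.swap) h
  have e : ∀ Z W : Matrix (Fin n × Fin n) (Fin n × Fin n) A, (Z * W).submatrix Prod.swap Prod.swap
      = Z.submatrix Prod.swap Prod.swap * W.submatrix Prod.swap Prod.swap := fun Z W =>
    (Matrix.submatrix_mul_equiv Z W Prod.swap (Equiv.prodComm (Fin n) (Fin n)) Prod.swap).symm
  simp only [e] at h'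
  exact h'

theorem commR (q : ℂ) (hq0 : q ≠ 0) (Lpinv : Matrix (Fin n) (Fin n) (UqGL q n))
    (hLp1 : LM q n true * Lpinv = 1) (hLp2 : Lpinv * LM q n true = 1) (m : ℕ) :
    Commute (RA q⁻¹ n (UqGL q n) * leg2 (LM q n false)) (leg1 ((LM q n false * Lpinv) ^ m)) := by
  rw [leg1_pow]
  apply Commute.pow_right
  rw [leg1_mul]
  have r1 := rel_mat (n := n) q true false (relGL.rll_pm)
  have r2 := rel_mat (n := n) q false false (relGL.rll false)
  have i1 : leg1 (LM q n true) * leg1 Lpinv = 1 := by rw [← leg1_mul, hLp1, leg1_one]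
  have i2 : leg1 Lpinv * leg1 (LM q n true) = 1 := by rw [← leg1_mul, hLp2, leg1_one]
  have j1 := RA_inv (n := n) (A := UqGL q n) q hq0
  have j2 := RA_inv' (n := n) (A := UqGL q n) q hq0
  generalize leg1 (LM q n true) = P1 at *
  generalize leg1 Lpinv = P1i at *
  generalize leg1 (LM q n false) = N1 at *
  generalize leg2 (LM q n false) = N2 at *
  generalize RA q n (UqGL q n) = R at *
  generalize RA q⁻¹ n (UqGL q n) = Ri at *
  have f : ∀ X, R * X * N2 = N2 * X * R → Ri * N2 * X = X * N2 * Ri := by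
    intro X hX
    calc Ri * N2 * X = Ri * (N2 * X * R) * Ri := by simp only [mul_assoc, j1, mul_one]
      _ = (Ri * R) * X * N2 * Ri := by rw [← hX]; simp only [mul_assoc]
      _ = _ := by rw [j2, one_mul]
  have f1 := f P1 r1
  have f2 := f N1 r2
  have f3 : P1i * (Ri * N2) = N2 * Ri * P1i := by
    calc P1i * (Ri * N2) = P1i * (Ri * N2 * P1) * P1i := by simp only [mul_assoc, i1, mul_one]
      _ = (P1i * P1) * N2 * Ri * P1i := by rw [f1]; simp only [mul_assoc]
      _ = _ := by rw [i2, one_mul]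
  show Ri * N2 * (N1 * P1i) = N1 * P1i * (Ri * N2)
  rw [mul_assoc N1, f3, ← mul_assoc (Ri * N2), f2]
  simp only [mul_assoc]

theorem commS (q : ℂ) (Lpinv : Matrix (Fin n) (Fin n) (UqGL q n))
    (hLp1 : LM q n true * Lpinv = 1) (hLp2 : Lpinv * LM q n true = 1) (m : ℕ) :
    Commute (SA q n (UqGL q n) * leg2 (LM q n true)) (leg1 ((LM q n false * Lpinv) ^ m)) := by
  rw [leg1_pow]
  apply Commute.pow_right
  rw [leg1_mul]
  have r1 := swap_rel q _ _ (rel_mat (n := n) q true false (relGL.rll_pm))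
  have r2 := swap_rel q _ _ (rel_mat (n := n) q true true (relGL.rll true))
  have i1 : leg1 (LM q n true) * leg1 Lpinv = 1 := by rw [← leg1_mul, hLp1, leg1_one]
  have i2 : leg1 Lpinv * leg1 (LM q n true) = 1 := by rw [← leg1_mul, hLp2, leg1_one]
  generalize leg1 (LM q n true) = P1 at *
  generalize leg1 Lpinv = P1i at *
  generalize leg1 (LM q n false) = N1 at *
  generalize leg2 (LM q n true) = P2 at *
  generalize SA q n (UqGL q n) = S at *
  have f3 : P1i * (S * P2) = P2 * S * P1i := by
    calc P1i * (S * P2) = P1i * (S * P2 * P1) * P1i := by simp only [mul_assoc, i1, mul_one]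
      _ = (P1i * P1) * P2 * S * P1i := by rw [r2]; simp only [mul_assoc]
      _ = _ := by rw [i2, one_mul]
  show S * P2 * (N1 * P1i) = N1 * P1i * (S * P2)
  rw [mul_assoc N1, f3, ← mul_assoc (S * P2), r1]
  simp only [mul_assoc]

theorem trq_central (q : ℂ) (hq0 : q ≠ 0) (Lpinv : Matrix (Fin n) (Fin n) (UqGL q n))
    (hLp1 : LM q n true * Lpinv = 1) (hLp2 : Lpinv * LM q n true = 1) (m : ℕ) (x : UqGL q n) :
    x * trq q ((LM q n false * Lpinv) ^ m) = trq q ((LM q n false * Lpinv) ^ m) * x := by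
  obtain ⟨x, rfl⟩ := RingQuot.mkAlgHom_surjective ℂ (relGL q n) x
  set T := trq q ((LM q n false * Lpinv) ^ m)
  induction x using FreeAlgebra.induction with
  | grade0 r => rw [AlgHom.commutes, Algebra.commutes]
  | grade1 g =>
    obtain ⟨p, b, d⟩ := g
    cases p with
    | false =>
      exact central_aux q (RA q n _) (RA q⁻¹ n _) (RA_inv q hq0) _ (LM q n false)
        (fun b d => ptr_R q hq0 _ b d) (commR q hq0 Lpinv hLp1 hLp2 m) b d
    | true =>
      exact central_aux q (SA q⁻¹ n _) (SA q n _) (SA_inv' q hq0) _ (LM q n true)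
        (fun b d => ptr_S q hq0 _ b d) (commS q Lpinv hLp1 hLp2 m) b d
  | mul a b ha hb => rw [map_mul, mul_assoc, hb, ← mul_assoc, ha, mul_assoc]
  | add a b ha hb => rw [map_add, add_mul, mul_add, ha, hb]

theorem entry_rel (q : ℂ) (hq0 : q ≠ 0) (Lpinv : Matrix (Fin n) (Fin n) (UqGL q n))
    (hLp1 : LM q n true * Lpinv = 1) (hLp2 : Lpinv * LM q n true = 1) (m : ℕ)
    (i j k : Fin n) (hik : i < k) :
    let Y := (LM q n false * Lpinv) ^ m
    lG q n false k j * Y i k + (q⁻¹ - q) • (lG q n false i j * Y k k)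
      = q⁻¹ • (Y i k * lG q n false k j)
        + (q⁻¹ - q) • ∑ y ∈ univ.filter (fun y => y < k), Y i y * lG q n false y j := by
  intro Y
  have h := congrFun (congrFun (commR q hq0 Lpinv hLp1 hLp2 m).eq (i, k)) (k, j)
  rw [mul_assoc, RA_mul, leg2_mul_leg1, leg2_mul_leg1, ← mul_assoc, mul_leg2, if_pos hik, if_neg hik.ne,
    one_smul, inv_inv] at h
  change lG q n false k j * Y i k + (q⁻¹ - q) • (lG q n false i j * Y k k) = _ at h
  rw [h]
  have e : ∀ y : Fin n, (leg1 Y * RA q⁻¹ n (UqGL q n)) (i, k) (k, y) * LM q n false y j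
      = (if y = k then q⁻¹ • (Y i k * lG q n false k j) else 0)
        + (if y < k then (q⁻¹ - q) • (Y i y * lG q n false y j) else 0) := by
    intro y
    rw [mul_RA]
    simp only [leg1, inv_inv, LM]
    by_cases hy : k = y
    · subst hy; simp
    · have : y ≠ k := Ne.symm hy
      by_cases hy2 : y < k <;> simp [hy, this, hy2]
  rw [sum_congr rfl fun y _ => e y, sum_add_distrib, smul_sum, sum_filter]
  simp

theorem psum {V : Type*} [AddCommGroup V] [Module ℂ V] (t : ℂ) (W B : Fin n → V) (i : Fin n)
    (h0 : ∀ k, k < i → W k = 0) (hi : W i = B i)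
    (hk : ∀ k, i < k → W k = (t - 1) • (∑ y ∈ univ.filter (fun y => y < k), W y - B k)) :
    ∑ k, W k = t ^ (n - 1 - (i:ℕ)) • B i
      - (t - 1) • ∑ k ∈ univ.filter (fun k : Fin n => i < k), t ^ (n - 1 - (k:ℕ)) • B k := by
  have key : ∀ r : ℕ, (i:ℕ) + 1 ≤ r → r ≤ n → ∑ y ∈ univ.filter (fun y : Fin n => (y:ℕ) < r), W y
      = t ^ (r - 1 - (i:ℕ)) • B i
      - (t - 1) • ∑ k ∈ univ.filter (fun k : Fin n => i < k ∧ (k:ℕ) < r), t ^ (r - 1 - (k:ℕ)) • B k := by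
    intro r hr
    induction r, hr using Nat.le_induction with
    | base =>
      intro _
      have e1 : univ.filter (fun k : Fin n => i < k ∧ (k:ℕ) < (i:ℕ) + 1) = ∅ := by
        ext k; simp only [mem_filter, mem_univ, true_and, Fin.lt_def, notMem_empty, iff_false]; omega
      rw [e1, sum_eq_single i]
      · simp [hi]
      · intro b hb hbi
        apply h0
        simp at hb
        omega
      · simp
    | succ r hr ih =>
      intro hrn
      have ih := ih (by omega)
      have hrk := hk ⟨r, hrn⟩ (Fin.lt_def.2 (by simpa using hr))
      have e1 : univ.filter (fun y : Fin n => (y:ℕ) < r + 1)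
          = insert ⟨r, hrn⟩ (univ.filter (fun y : Fin n => (y:ℕ) < r)) := by
        ext y; simp [Fin.ext_iff]; omega
      have e2 : univ.filter (fun k : Fin n => i < k ∧ (k:ℕ) < r + 1)
          = insert ⟨r, hrn⟩ (univ.filter (fun k : Fin n => i < k ∧ (k:ℕ) < r)) := by
        ext y; simp only [mem_filter, mem_univ, true_and, mem_insert, Fin.ext_iff, Fin.lt_def]; omega
      have e3 : univ.filter (fun y : Fin n => y < ⟨r, hrn⟩) = univ.filter (fun y : Fin n => (y:ℕ) < r) := by
        ext y; simp [Fin.lt_def]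
      have e4 : ∑ k ∈ univ.filter (fun k : Fin n => i < k ∧ (k:ℕ) < r), t ^ (r + 1 - 1 - (k:ℕ)) • B k
          = t • ∑ k ∈ univ.filter (fun k : Fin n => i < k ∧ (k:ℕ) < r), t ^ (r - 1 - (k:ℕ)) • B k := by
        rw [smul_sum]
        refine sum_congr rfl fun k hk => ?_
        simp only [mem_filter] at hk
        rw [smul_smul, ← pow_succ']
        congr 2
        omega
      have e5 : r + 1 - 1 - (i:ℕ) = (r - 1 - i) + 1 := by omega
      rw [e1, sum_insert (by simp), hrk, e3, e2, sum_insert (by simp), e4, ih, e5]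
      simp only [Nat.add_sub_cancel, Nat.sub_self, pow_zero]
      module
  have := key n (by omega) le_rfl
  simpa using this

theorem hw_main {V : Type*} (q : ℂ) (hq0 : q ≠ 0) (lam : Fin n → ℤ)
    (Lpinv : Matrix (Fin n) (Fin n) (UqGL q n))
    (hLp1 : LM q n true * Lpinv = 1) (hLp2 : Lpinv * LM q n true = 1)
    [AddCommGroup V] [Module (UqGL q n) V] [Module ℂ V] [IsScalarTower ℂ (UqGL q n) V]
    [SMulCommClass (UqGL q n) ℂ V]
    (ξ : V)
    (hhw1 : ∀ i j : Fin n, i < j → lG q n true i j • ξ = 0)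
    (hhw2 : ∀ i : Fin n, lG q n false i i • ξ = (q ^ (lam i)) • ξ)
    (m : ℕ) :
    (∀ i j, i < j → ((LM q n false * Lpinv) ^ m) i j • ξ = 0) ∧
    (∀ i, ((LM q n false * Lpinv) ^ m) i i • ξ = yy n (q^2) (fun i => q ^ (2 * lam i)) m i • ξ) := by
  have tri : ∀ i j : Fin n, i < j → lG q n false i j = 0 := by
    intro i j hij
    have := RingQuot.mkAlgHom_rel ℂ (relGL.tri_minus (q := q) hij)
    rwa [map_zero] at this
  have trip : ∀ i j : Fin n, j < i → lG q n true i j = 0 := by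
    intro i j hij
    have := RingQuot.mkAlgHom_rel ℂ (relGL.tri_plus (q := q) hij)
    rwa [map_zero] at this
  have dpm : ∀ i : Fin n, lG q n true i i * lG q n false i i = 1 := by
    intro i
    have := RingQuot.mkAlgHom_rel ℂ (relGL.diag_pm (q := q) i)
    rwa [map_one, map_mul] at this
  have hplus : ∀ i, lG q n true i i • ξ = (q ^ (lam i))⁻¹ • ξ := by
    intro i
    have h0 : q ^ lam i ≠ 0 := zpow_ne_zero _ hq0
    have : (lG q n true i i * lG q n false i i) • ξ = ξ := by rw [dpm, one_smul]
    rw [mul_smul, hhw2, smul_comm] at this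
    rw [← this, smul_smul, this, inv_mul_cancel₀ h0, one_smul]
  have hplus' : ∀ i j, lG q n true i j • ξ = if i = j then (q ^ (lam j))⁻¹ • ξ else 0 := by
    intro i j
    rcases lt_trichotomy i j with h | h | h
    · rw [hhw1 i j h, if_neg h.ne]
    · subst h; rw [hplus, if_pos rfl]
    · rw [trip i j h, zero_smul, if_neg h.ne']
  have hinv : ∀ k j, Lpinv k j • ξ = if k = j then (q ^ (lam j)) • ξ else 0 := by
    intro k j
    have h0 : q ^ lam j ≠ 0 := zpow_ne_zero _ hq0
    have h := congrArg (fun X => X k j • ξ) hLp2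
    simp only [Matrix.mul_apply, sum_smul, mul_smul, LM, hplus'] at h
    simp only [smul_ite, smul_zero, sum_ite_eq', mem_univ, if_true] at h
    rw [smul_comm] at h
    have h2 : Lpinv k j • ξ = q ^ lam j • ((1 : Matrix (Fin n) (Fin n) (UqGL q n)) k j • ξ) := by
      rw [← h, smul_smul, mul_inv_cancel₀ h0, one_smul]
    rw [h2, Matrix.one_apply]
    split_ifs <;> simp
  have hM : ∀ k j, (LM q n false * Lpinv) k j • ξ = q ^ lam j • (lG q n false k j • ξ) := by
    intro k j
    simp only [Matrix.mul_apply, sum_smul, mul_smul, hinv, smul_ite, smul_zero, sum_ite_eq', sum_ite_eq, mem_univ, if_true]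
    rw [smul_comm]; rfl
  induction m with
  | zero =>
    constructor
    · intro i j hij; simp [Matrix.one_apply, hij.ne]
    · intro i; simp [yy]
  | succ m ih =>
    obtain ⟨ih1, ih2⟩ := ih
    set Y := (LM q n false * Lpinv) ^ m with hY
    have hstep : ∀ i j, ((LM q n false * Lpinv) ^ (m+1)) i j • ξ
        = q ^ lam j • ∑ k, (Y i k * lG q n false k j) • ξ := by
      intro i j
      rw [pow_succ, ← hY, Matrix.mul_apply, sum_smul, smul_sum]
      refine sum_congr rfl fun k _ => ?_
      rw [mul_smul, hM, smul_comm, mul_smul]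
    have hrel : ∀ i j k, i < k → (Y i k * lG q n false k j) • ξ
        = (q^2 - 1) • (∑ y ∈ univ.filter (fun y => y < k), (Y i y * lG q n false y j) • ξ
          - yy n (q^2) (fun i => q ^ (2 * lam i)) m k • (lG q n false i j • ξ)) := by
      intro i j k hik
      have h := congrArg (fun x => q • (x • ξ)) (entry_rel q hq0 Lpinv hLp1 hLp2 m i j k hik)
      simp only [add_smul, ← hY, mul_smul, ih1 i k hik, smul_zero, zero_add, smul_assoc, ih2, sum_smul, smul_add] at h
      rw [smul_smul q q⁻¹, mul_inv_cancel₀ hq0, one_smul, smul_comm (lG q n false i j)] at h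
      simp only [mul_smul]
      have e : q ^ 2 - 1 = - (q * (q⁻¹ - q)) := by field_simp; ring
      rw [e, neg_smul, mul_smul, smul_sub, smul_sub, h]
      abel
    constructor
    · intro i j hij
      rw [hstep]
      have hz : ∀ r : ℕ, ∀ k : Fin n, (k:ℕ) = r → (Y i k * lG q n false k j) • ξ = 0 := by
        intro r
        induction r using Nat.strong_induction_on with
        | _ r ihr =>
          intro k hkr
          by_cases hkj : k < j
          · rw [tri k j hkj, mul_zero, zero_smul]
          · rw [hrel i j k (lt_of_lt_of_le hij (not_lt.1 hkj)), tri i j hij, zero_smul, smul_zero, sub_zero,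
              sum_eq_zero, smul_zero]
            intro y hy
            simp only [mem_filter, mem_univ, true_and] at hy
            exact ihr y (by rw [← hkr]; exact hy) y rfl
      rw [sum_eq_zero fun k _ => hz _ k rfl, smul_zero]
    · intro i
      rw [hstep]
      rw [psum (q^2) (fun k => (Y i k * lG q n false k i) • ξ)
        (fun k => yy n (q^2) (fun i => q ^ (2 * lam i)) m k • (q ^ lam i • ξ)) i]
      · simp only [yy]
        have e : q ^ (2 * lam i) = q ^ lam i * q ^ lam i := by
          rw [two_mul, zpow_add₀ hq0]
        have e2 : ∑ k ∈ univ.filter (fun k : Fin n => i < k), (q^2) ^ (n - 1 - (k:ℕ)) •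
              yy n (q^2) (fun i => q ^ (2 * lam i)) m k • (q ^ lam i • ξ)
            = (∑ k ∈ univ.filter (fun k : Fin n => i < k), (q^2) ^ (n - 1 - (k:ℕ)) *
              yy n (q^2) (fun i => q ^ (2 * lam i)) m k) • (q ^ lam i • ξ) := by
          rw [sum_smul]
          simp only [mul_smul]
        rw [e2, e]
        module
      · intro k hk
        simp only [tri k i hk, mul_zero, zero_smul]
      · simp only [mul_smul]
        rw [hhw2, smul_comm, ih2, smul_comm]
      · intro k hk
        rw [hrel i i k hk, hhw2]

end main

/-- **Theorem 1.1.** Eigenvalues of the quantum Gelfand invariants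
`tr_q M^m`, `M = L⁻(L⁺)⁻¹`, in the irreducible highest weight module `L_q(λ)`. -/
theorem stmt_0 (n : ℕ) (hn : 1 ≤ n) (q : ℂ) (hq0 : q ≠ 0)
    (hq : ∀ k : ℕ, k ≠ 0 → q ^ k ≠ 1)
    (lam : Fin n → ℤ) (ell : Fin n → ℤ)
    (hell : ∀ i : Fin n, ell i = lam i + (n : ℤ) - 1 - (i : ℤ))
    (hdist : Function.Injective ell)
    (Lpinv : Matrix (Fin n) (Fin n) (UqGL q n))
    (hLp1 : LM q n true * Lpinv = 1) (hLp2 : Lpinv * LM q n true = 1)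
    (V : Type*) [AddCommGroup V] [Module (UqGL q n) V]
    (hirr : IsSimpleModule (UqGL q n) V)
    (ξ : V) (hξ : ξ ≠ 0)
    (hhw1 : ∀ i j : Fin n, i < j → lG q n true i j • ξ = 0)
    (hhw2 : ∀ i : Fin n, lG q n false i i • ξ = algebraMap ℂ (UqGL q n) (q ^ (lam i)) • ξ)
    (m : ℕ) (v : V) :
    trq q ((LM q n false * Lpinv) ^ m) • v =
      algebraMap ℂ (UqGL q n)
        (∑ k : Fin n, q ^ (2 * ell k * (m : ℤ)) *
          ((∏ j : Fin n, qint q (ell j - ell k + 1)) /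
            (∏ j ∈ Finset.univ.erase k, qint q (ell j - ell k)))) • v := by
  letI : Module ℂ V := Module.compHom V (algebraMap ℂ (UqGL q n))
  have hs : ∀ (c : ℂ) (x : V), c • x = algebraMap ℂ (UqGL q n) c • x := fun _ _ => rfl
  haveI : IsScalarTower ℂ (UqGL q n) V := ⟨fun c u x => by
    rw [hs, Algebra.smul_def, mul_smul]⟩
  haveI : SMulCommClass (UqGL q n) ℂ V := ⟨fun u c x => by
    rw [hs, hs, ← mul_smul, ← mul_smul, Algebra.commutes]⟩
  have hw := hw_main q hq0 lam Lpinv hLp1 hLp2 ξ hhw1 (fun i => hhw2 i) m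
  have hcent := trq_central q hq0 Lpinv hLp1 hLp2 m
  rw [← final_scal n q hq0 hq lam ell hell hdist m]
  have hξe : trq q ((LM q n false * Lpinv) ^ m) • ξ = algebraMap ℂ (UqGL q n)
      (∑ i : Fin n, q ^ ((n : ℤ) - 1 - 2 * (i : ℤ)) * yy n (q^2) (fun i => q ^ (2 * lam i)) m i) • ξ := by
    rw [← hs, trq_eq, Finset.sum_smul, Finset.sum_smul]
    refine Finset.sum_congr rfl fun i _ => ?_
    rw [smul_assoc, hw.2 i, mul_smul]
  obtain ⟨u, rfl⟩ := IsSimpleModule.toSpanSingleton_surjective (UqGL q n) hξ v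
  rw [LinearMap.toSpanSingleton_apply, ← mul_smul, ← hcent, mul_smul, hξe, ← mul_smul, ← mul_smul,
    Algebra.commutes]
end

section
/- Let σ ∈ S_k and let σ = s_{i₁}⋯s_{i_l} be any reduced decomposition of σ into adjacent transpositions; set P^q_σ = P^q_{i₁,i₁+1} ⋯ P^q_{i_l,i_l+1} as an operator on (ℂ^n)^{⊗k}. Then for any indices 1 ≤ a₁ < a₂ < ⋯ < a_k ≤ n and any τ ∈ S_k, P^q_σ( e_{a_{τ(1)}} ⊗ ⋯ ⊗ e_{a_{τ(k)}} ) = q^{l(στ^{−1}) − l(τ)} · e_{a_{τσ^{−1}(1)}} ⊗ ⋯ ⊗ e_{a_{τσ^{−1}(k)}}, where l(·) denotes the length of a permutation. In particular, P^q_σ does not depend on the chosen reduced decomposition. -/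
open Matrix Equiv

/-- Number of inversions of a permutation, i.e. its Coxeter length. -/
def invCount {m : ℕ} (σ : Equiv.Perm (Fin m)) : ℕ :=
  (Finset.univ.filter fun p : Fin m × Fin m => p.1 < p.2 ∧ σ p.2 < σ p.1).card

/-- `L` is a reduced decomposition of `σ` into adjacent transpositions `s_i = (i, i+1)`. -/
def IsReducedWord {m : ℕ} (σ : Equiv.Perm (Fin (m + 1))) (L : List (Fin m)) : Prop :=
  (L.map fun i => Equiv.swap (Fin.castSucc i) i.succ).prod = σ ∧ L.length = invCount σ

/-- The `q`-permutation operator `P^q` acting in the tensor legs `i, i+1` of `(ℂ^n)^{⊗(m+1)}`,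
written as a matrix in the standard tensor basis (indexed by functions `Fin (m+1) → Fin n`).
Here `P^q = ∑ e_{ii}⊗e_{ii} + q∑_{i>j} e_{ij}⊗e_{ji} + q⁻¹∑_{i<j} e_{ij}⊗e_{ji}`. -/
noncomputable def Pstep (q : ℂ) (n m : ℕ) (i : Fin m) :
    Matrix (Fin (m + 1) → Fin n) (Fin (m + 1) → Fin n) ℂ :=
  fun v w =>
    if (∀ b, b ≠ Fin.castSucc i → b ≠ i.succ → v b = w b) then
      (if w (Fin.castSucc i) = v i.succ ∧ w i.succ = v (Fin.castSucc i) then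
        (if v (Fin.castSucc i) = v i.succ then 1
         else if v i.succ < v (Fin.castSucc i) then q else q⁻¹)
       else 0)
    else 0

/-- Number of inversions of a word, as a sum of indicators. -/
def invW {m n : ℕ} (v : Fin m → Fin n) : ℤ :=
  ∑ p : Fin m × Fin m, if p.1 < p.2 ∧ v p.2 < v p.1 then 1 else 0

theorem invW_perm {m n : ℕ} (a : Fin m → Fin n) (ha : StrictMono a) (τ : Equiv.Perm (Fin m)) :
    invW (a ∘ τ) = (invCount τ : ℤ) := by
  unfold invW invCount
  simp [ha.lt_iff_lt]

theorem invCount_inv {m : ℕ} (σ : Equiv.Perm (Fin m)) : invCount σ⁻¹ = invCount σ := by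
  unfold invCount
  refine Finset.card_bij' (fun p _ => (σ⁻¹ p.2, σ⁻¹ p.1)) (fun p _ => (σ p.2, σ p.1)) ?_ ?_ ?_ ?_
  all_goals simp +contextual

theorem swap_lt {m : ℕ} (i : Fin m) (x y : Fin (m + 1)) :
    (Equiv.swap (Fin.castSucc i) i.succ x < Equiv.swap (Fin.castSucc i) i.succ y) ↔
      ((x < y ∧ ¬ (x = Fin.castSucc i ∧ y = i.succ)) ∨ (x = i.succ ∧ y = Fin.castSucc i)) := by
  simp only [Equiv.swap_apply_def]
  split_ifs <;> simp only [Fin.ext_iff, Fin.lt_def, Fin.val_castSucc, Fin.val_succ] at * <;> omega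

theorem invW_swap {m n : ℕ} (i : Fin m) (v : Fin (m + 1) → Fin n) :
    invW (v ∘ Equiv.swap (Fin.castSucc i) i.succ) = invW v
      - (if v i.succ < v (Fin.castSucc i) then 1 else 0)
      + (if v (Fin.castSucc i) < v i.succ then 1 else 0) := by
  have h1 : invW (v ∘ Equiv.swap (Fin.castSucc i) i.succ) =
      ∑ p : Fin (m + 1) × Fin (m + 1),
        if Equiv.swap (Fin.castSucc i) i.succ p.1 < Equiv.swap (Fin.castSucc i) i.succ p.2 ∧
          v p.2 < v p.1 then (1 : ℤ) else 0 := by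
    unfold invW
    refine Fintype.sum_equiv (Equiv.prodCongr (Equiv.swap (Fin.castSucc i) i.succ)
      (Equiv.swap (Fin.castSucc i) i.succ)) _ _ ?_
    intro p
    simp
  have h2 : (if v i.succ < v (Fin.castSucc i) then (1 : ℤ) else 0) =
      ∑ p : Fin (m + 1) × Fin (m + 1), if p = (Fin.castSucc i, i.succ) then
        (if v p.2 < v p.1 then (1 : ℤ) else 0) else 0 := by
    simp
  have h3 : (if v (Fin.castSucc i) < v i.succ then (1 : ℤ) else 0) =
      ∑ p : Fin (m + 1) × Fin (m + 1), if p = (i.succ, Fin.castSucc i) then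
        (if v p.2 < v p.1 then (1 : ℤ) else 0) else 0 := by
    simp
  rw [h1, h2, h3, invW, ← Finset.sum_sub_distrib, ← Finset.sum_add_distrib]
  refine Finset.sum_congr rfl ?_
  rintro ⟨x, y⟩ -
  simp only [swap_lt, Prod.mk.injEq]
  have hlt : Fin.castSucc i < i.succ := Fin.castSucc_lt_succ
  by_cases hv : v y < v x
  · by_cases hA : x = Fin.castSucc i ∧ y = i.succ
    · obtain ⟨rfl, rfl⟩ := hA
      simp [hv, hlt, hlt.ne, hlt.ne']
    · by_cases hB : x = i.succ ∧ y = Fin.castSucc i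
      · obtain ⟨rfl, rfl⟩ := hB
        simp [hv, hlt.ne, hlt.ne', hlt.le]
      · simp [hv, hA, hB]
  · simp [hv]

theorem Pstep_single (q : ℂ) (n m : ℕ) (i : Fin m) (w : Fin (m + 1) → Fin n) :
    Pstep q n m i *ᵥ Pi.single w (1 : ℂ) =
      (q ^ (invW (w ∘ Equiv.swap (Fin.castSucc i) i.succ) - invW w)) •
        (Pi.single (w ∘ Equiv.swap (Fin.castSucc i) i.succ) 1 :
          (Fin (m + 1) → Fin n) → ℂ) := by
  have hlt : Fin.castSucc i < i.succ := Fin.castSucc_lt_succ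
  rw [Matrix.mulVec_single_one, invW_swap]
  ext v
  simp only [Matrix.col_apply, Pi.smul_apply, smul_eq_mul, Pi.single_apply]
  by_cases hv : v = w ∘ Equiv.swap (Fin.castSucc i) i.succ
  · subst hv
    have hb : ∀ b, b ≠ Fin.castSucc i → b ≠ i.succ →
        (w ∘ Equiv.swap (Fin.castSucc i) i.succ) b = w b := by
      intro b h1 h2
      simp [Equiv.swap_apply_of_ne_of_ne h1 h2]
    unfold Pstep
    rw [if_pos hb]
    rcases lt_trichotomy (w (Fin.castSucc i)) (w i.succ) with h | h | h
    · simp [h, h.ne', h.not_gt]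
    · simp [h]
    · simp [h, h.ne, h.not_gt]
  · rw [if_neg hv, mul_zero]
    unfold Pstep
    split_ifs with h1 h2
    all_goals first
      | rfl
      | (exfalso
         apply hv
         funext b
         by_cases hb1 : b = Fin.castSucc i
         · subst hb1; simp [h2.2]
         · by_cases hb2 : b = i.succ
           · subst hb2; simp [h2.1]
           · simp [Equiv.swap_apply_of_ne_of_ne hb1 hb2, h1 b hb1 hb2])

theorem Pprod_single (q : ℂ) (hq0 : q ≠ 0) (n m : ℕ) (L : List (Fin m))
    (w : Fin (m + 1) → Fin n) :
    (L.map (Pstep q n m)).prod *ᵥ Pi.single w (1 : ℂ) =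
      (q ^ (invW (w ∘ ⇑((L.map fun i => Equiv.swap (Fin.castSucc i) i.succ).prod)⁻¹) - invW w)) •
        (Pi.single (w ∘ ⇑((L.map fun i => Equiv.swap (Fin.castSucc i) i.succ).prod)⁻¹) 1 :
          (Fin (m + 1) → Fin n) → ℂ) := by
  induction L with
  | nil =>
    rw [List.map_nil, List.prod_nil, Matrix.one_mulVec]
    simp
  | cons i L ih =>
    rw [List.map_cons, List.prod_cons, ← Matrix.mulVec_mulVec, ih, Matrix.mulVec_smul,
      Pstep_single, smul_smul, ← zpow_add₀ hq0, List.map_cons, List.prod_cons, _root_.mul_inv_rev,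
      Equiv.swap_inv, Equiv.Perm.coe_mul, Function.comp_assoc]
    congr 2
    ring

/-- For any reduced decomposition `σ = s_{i₁}⋯s_{i_l}`, the operator
`P^q_σ = P^q_{i₁,i₁+1}⋯P^q_{i_l,i_l+1}` satisfies, for strictly increasing `a₁ < ⋯ < a_k`
and any `τ ∈ S_k`,
`P^q_σ(e_{a∘τ}) = q^{l(στ⁻¹) − l(τ)} e_{a∘τ∘σ⁻¹}`;
in particular `P^q_σ` does not depend on the chosen reduced decomposition. -/
theorem stmt_11 (n m : ℕ) (q : ℂ) (hq0 : q ≠ 0)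
    (σ : Equiv.Perm (Fin (m + 1))) (L : List (Fin m)) (hL : IsReducedWord σ L)
    (a : Fin (m + 1) → Fin n) (ha : StrictMono a) (τ : Equiv.Perm (Fin (m + 1))) :
    (L.map (Pstep q n m)).prod *ᵥ Pi.single (a ∘ τ) (1 : ℂ) =
        (q ^ ((invCount (σ * τ⁻¹) : ℤ) - (invCount τ : ℤ))) •
          (Pi.single (a ∘ τ ∘ ⇑σ⁻¹) 1 : (Fin (m + 1) → Fin n) → ℂ) ∧
      ∀ L' : List (Fin m), IsReducedWord σ L' →
        (L.map (Pstep q n m)).prod = (L'.map (Pstep q n m)).prod := by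
  obtain ⟨hσ, -⟩ := hL
  constructor
  · rw [Pprod_single q hq0, hσ, Function.comp_assoc, ← Equiv.Perm.coe_mul, invW_perm a ha,
      invW_perm a ha, ← invCount_inv (τ * σ⁻¹), _root_.mul_inv_rev, inv_inv]
  · rintro L' ⟨hσ', -⟩
    refine Matrix.ext_of_mulVec_single fun w => ?_
    rw [Pprod_single q hq0, Pprod_single q hq0, hσ, hσ']
end

section
/- Let λ = (λ₁,…,λ_n) be an n-tuple of integers such that the numbers ℓ_i = λ_i + n − i are pairwise distinct. Then for every integer m ≥ 1, the central element tr( D · (L⁺(L⁻)^{−1})^m ) acts in the module L_q(λ) as multiplication by the scalar ∑_{k=1}^n q^{−2ℓ_k m} · (∏_{j=1}^n [ℓ_j − ℓ_k + 1]_q) / (∏_{j≠k} [ℓ_j − ℓ_k]_q). -/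
open Matrix

section Aux

set_option linter.unusedSectionVars false

variable {n : ℕ} {A : Type*} [Ring A] [Algebra ℂ A]

/-- generalised R-matrix -/
noncomputable def Rg (q : ℂ) (r : Fin n → Fin n → Prop) [DecidableRel r] (A : Type*) [Ring A] [Algebra ℂ A] :
    Matrix (Fin n × Fin n) (Fin n × Fin n) A :=
  fun p s => algebraMap ℂ A
    ((if p = s then (if p.1 = p.2 then q else 1) else 0) +
      (if s.1 = p.2 ∧ s.2 = p.1 ∧ r p.1 p.2 then q - q⁻¹ else 0))

/-- exchange relation in components -/
def GRel (q : ℂ) (r : Fin n → Fin n → Prop) [DecidableRel r] (l X : Fin n → Fin n → A) : Prop :=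
  ∀ a b c d, (if a = c then q else 1) • (l a b * X c d)
      + (if r a c then (q - q⁻¹) • (l c b * X a d) else 0)
    = (if a = d then q else 1) • (X c d * l a b)
      + (if a = d then ∑ y, (if r a y then (q - q⁻¹) • (X c y * l y b) else 0) else 0)

theorem Rg_mul (q : ℂ) (r : Fin n → Fin n → Prop) [DecidableRel r] {κ : Type*}
    (Y : Matrix (Fin n × Fin n) κ A) (a c : Fin n) (w : κ) :
    (Rg q r A * Y) (a, c) w = (if a = c then q else 1) • Y (a, c) w
      + (if r a c then (q - q⁻¹) • Y (c, a) w else 0) := by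
  simp only [Matrix.mul_apply, Rg, map_add, add_mul, Finset.sum_add_distrib]
  congr 1
  · rw [Finset.sum_eq_single (a, c)]
    · simp [Algebra.smul_def]
    · intro b _ hb
      rw [if_neg (Ne.symm hb)]; simp
    · simp
  · rw [Finset.sum_eq_single (c, a)]
    · by_cases h : r a c <;> simp [Algebra.smul_def, h]
    · rintro ⟨x, y⟩ _ hb
      rw [if_neg]; · simp
      rintro ⟨h1, h2, -⟩
      exact hb (by simp_all)
    · simp

theorem leg1_mul_leg2 (l X : Fin n → Fin n → A) (a c b d : Fin n) :
    ((leg1 l * leg2 X : Matrix (Fin n × Fin n) (Fin n × Fin n) A)) (a, c) (b, d)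
      = l a b * X c d := by
  simp only [Matrix.mul_apply, leg1, leg2]
  rw [Finset.sum_eq_single (b, c)]
  · simp
  · rintro ⟨x, y⟩ _ hb
    by_cases h1 : c = y
    · by_cases h2 : x = b
      · exact absurd (by simp [h1, h2]) hb
      · simp [h2]
    · simp [h1]
  · simp

theorem leg2_mul {κ : Type*} (X : Fin n → Fin n → A) (Z : Matrix (Fin n × Fin n) κ A)
    (a c : Fin n) (w : κ) :
    (leg2 X * Z) (a, c) w = ∑ y, X c y * Z (a, y) w := by
  simp only [Matrix.mul_apply, leg2, Fintype.sum_prod_type]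
  rw [Finset.sum_eq_single a]
  · simp
  · intro b _ hb
    simp [Ne.symm hb]
  · simp

theorem leg2_mul_leg2 (X Y : Matrix (Fin n) (Fin n) A) :
    (leg2 X * leg2 Y : Matrix (Fin n × Fin n) (Fin n × Fin n) A) = leg2 (X * Y) := by
  ext ⟨a, c⟩ ⟨b, d⟩
  refine (leg2_mul (fun i j => X i j) _ _ _ _).trans ?_
  by_cases h : a = b <;> simp [leg2, h, Matrix.mul_apply]

theorem leg2_one : (leg2 (1 : Matrix (Fin n) (Fin n) A)) = 1 := by
  ext ⟨a, c⟩ ⟨b, d⟩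
  by_cases h : a = b <;> simp [leg2, h, Matrix.one_apply]

theorem GRel_of (q : ℂ) (r : Fin n → Fin n → Prop) [DecidableRel r] (l X : Fin n → Fin n → A)
    (h : Rg q r A * (leg1 l * leg2 X) = leg2 X * (Rg q r A * leg1 l)) : GRel q r l X := by
  intro a b c d
  have := congrFun (congrFun h (a, c)) (b, d)
  rw [Rg_mul, leg1_mul_leg2, leg1_mul_leg2, leg2_mul] at this
  rw [this]
  simp only [Rg_mul, mul_add, Finset.sum_add_distrib, leg1]
  congr 1
  · rw [Finset.sum_eq_single d]
    · simp
    · intro y _ hy; simp [hy]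
    · simp
  · by_cases h : a = d
    · simp only [h, if_true]
      refine Finset.sum_congr rfl fun y _ => ?_
      split_ifs <;> simp
    · simp [h]

theorem Rg_inv (q : ℂ) (hq : q ≠ 0) (r : Fin n → Fin n → Prop) [DecidableRel r]
    (hr : ∀ a b, r a b → ¬ r b a) : Rg q r A * Rg q⁻¹ r A = 1 := by
  have hirr : ∀ a, ¬ r a a := fun a h => hr a a h h
  ext ⟨a, c⟩ ⟨b, d⟩
  rw [Rg_mul]
  simp only [Rg, Matrix.one_apply, Algebra.smul_def, Prod.mk.injEq]
  have key : ((if a = c then q else 1) * ((if a = b ∧ c = d then (if a = c then q⁻¹ else 1) else 0)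
      + (if b = c ∧ d = a ∧ r a c then q⁻¹ - q⁻¹⁻¹ else 0)) +
      (if r a c then (q - q⁻¹) * ((if c = b ∧ a = d then (if c = a then q⁻¹ else 1) else 0)
      + (if b = a ∧ d = c ∧ r c a then q⁻¹ - q⁻¹⁻¹ else 0)) else 0) : ℂ)
      = if a = b ∧ c = d then 1 else 0 := by
    by_cases hac : a = c
    · subst hac
      simp only [hirr, if_true, if_false, and_false, add_zero]
      split_ifs <;> simp [hq]
    · by_cases h : r a c
      · have h2 := hr _ _ h
        simp only [h, h2, hac, Ne.symm hac, if_true, if_false, and_true, and_false, add_zero,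
          inv_inv, one_mul, @eq_comm _ b c, @eq_comm _ d a]
        split_ifs <;> ring
      · simp [h, hac]
  rw [← map_one (algebraMap ℂ A), ← map_zero (algebraMap ℂ A), ← apply_ite (algebraMap ℂ A), ← key]
  simp only [map_add, map_mul]
  congr 1
  split_ifs <;> simp

/-- centrality -/
theorem GRel_central (q : ℂ) (hq : q ≠ 0) (r : Fin n → Fin n → Prop) [DecidableRel r]
    (hr : ∀ a b, r a b → ¬ r b a) (l X : Fin n → Fin n → A) (D : Fin n → ℂ)
    (hD : ∀ a y, r a y → D a * q⁻¹ - q * D y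
      - (q - q⁻¹) * ∑ c, (if r a c ∧ r c y then D c else 0) = 0)
    (htr : ∀ a b c, r a b → r b c → r a c)
    (h : GRel q r l X) (a b : Fin n) :
    l a b * ∑ c, D c • X c c = (∑ c, D c • X c c) * l a b := by
  have hirr : ∀ a, ¬ r a a := fun a h => hr a a h h
  have h1 : ∀ c, D c • (l a b * X c c - X c c * l a b) =
      (if c = a then (D a * q⁻¹ * (q - q⁻¹)) • ∑ y, (if r a y then X a y * l y b else 0) else 0)
      - (if r a c then (D c * (q - q⁻¹) * q) • (X a c * l c b)  else 0)
      - ∑ y, (if r a c ∧ r c y then (D c * (q - q⁻¹) * (q - q⁻¹)) • (X a y * l y b) else 0) := by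
    intro c
    have e := h a b c c
    by_cases hac : c = a
    · subst hac
      simp only [hirr, if_true, if_false, add_zero, false_and, Finset.sum_const_zero, sub_zero] at e ⊢
      have e2 : q • (l c b * X c c - X c c * l c b) =
          (q - q⁻¹) • ∑ y, (if r c y then X c y * l y b else 0) := by
        rw [smul_sub, e, add_sub_cancel_left, Finset.smul_sum]
        refine Finset.sum_congr rfl fun y _ => ?_
        split_ifs <;> simp
      have e3 : (l c b * X c c - X c c * l c b) = q⁻¹ • (q - q⁻¹) • ∑ y, (if r c y then X c y * l y b else 0) := by
        rw [← e2, smul_smul, inv_mul_cancel₀ hq, one_smul]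
      rw [e3, smul_smul, smul_smul]
    · have f := h c b a c
      simp only [if_neg hac, if_neg (Ne.symm hac), if_true, one_smul, add_zero] at e f
      simp only [if_neg hac, zero_sub]
      by_cases hh : r a c
      · simp only [hh, hr _ _ hh, if_true, if_false, add_zero, true_and] at e f ⊢
        have e' : l a b * X c c - X c c * l a b = - ((q - q⁻¹) • (l c b * X a c)) := by
          rw [← e]; abel
        rw [e', f]
        simp only [smul_neg, smul_add, smul_smul, Finset.smul_sum, neg_add, sub_eq_add_neg, mul_assoc]
        congr 2
        refine Finset.sum_congr rfl fun y _ => ?_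
        split_ifs <;> simp [smul_smul, mul_assoc]
      · simp only [hh, if_false, add_zero, false_and, Finset.sum_const_zero] at e ⊢
        rw [e]; simp
  rw [← sub_eq_zero, Finset.mul_sum, Finset.sum_mul, ← Finset.sum_sub_distrib]
  simp only [mul_smul_comm, smul_mul_assoc, ← smul_sub]
  simp only [h1, Finset.sum_sub_distrib]
  rw [Finset.sum_ite_eq' Finset.univ a]
  simp only [Finset.mem_univ, if_true]
  rw [Finset.sum_comm, Finset.smul_sum, ← Finset.sum_sub_distrib, ← Finset.sum_sub_distrib]
  refine Finset.sum_eq_zero fun y _ => ?_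
  by_cases hy : r a y
  · have e : (∑ c, (if r a c ∧ r c y then (D c * (q - q⁻¹) * (q - q⁻¹)) • (X a y * l y b) else 0))
        = ((q - q⁻¹) * ((q - q⁻¹) * ∑ c, (if r a c ∧ r c y then D c else 0))) • (X a y * l y b) := by
      rw [← mul_assoc, Finset.mul_sum, Finset.sum_smul]
      refine Finset.sum_congr rfl fun c _ => ?_
      split_ifs
      · congr 1; ring
      · simp
    rw [e, if_pos hy, if_pos hy, ← sub_smul, ← sub_smul]
    have : D a * q⁻¹ * (q - q⁻¹) - D y * (q - q⁻¹) * q -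
        (q - q⁻¹) * ((q - q⁻¹) * ∑ c, (if r a c ∧ r c y then D c else 0)) = 0 := by
      linear_combination (q - q⁻¹) * hD a y hy
    rw [this, zero_smul]
  · rw [if_neg hy, if_neg hy]
    rw [Finset.sum_eq_zero]
    · simp
    · intro c _
      rw [if_neg]
      rintro ⟨h1, h2⟩
      exact hy (htr _ _ _ h1 h2)

end Aux
section Scal

open Polynomial in
theorem sum_prod_ratio {ι : Type*} [DecidableEq ι] (s : Finset ι) (t : ι → ℂ) (Q : ℂ)
    (ht0 : ∀ i ∈ s, t i ≠ 0) (ht : Set.InjOn t s) :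
    (Q - 1) * ∑ k ∈ s, ∏ j ∈ s.erase k, ((Q * t k - t j) / (t k - t j)) = Q ^ s.card - 1 := by
  set f : ℂ[X] := ∏ j ∈ s, (C Q * X - C (t j)) with hf
  set g : ℂ[X] := ∏ j ∈ s, (X - C (t j)) with hg
  have hfd : f.natDegree ≤ s.card := by
    refine (natDegree_prod_le _ _).trans ?_
    refine (Finset.sum_le_card_nsmul _ _ 1 fun j _ => ?_).trans (by simp)
    compute_degree
  have hgd : g.natDegree ≤ s.card := by
    refine (natDegree_prod_le _ _).trans ?_
    refine (Finset.sum_le_card_nsmul _ _ 1 fun j _ => ?_).trans (by simp)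
    compute_degree
  have hfc : f.coeff s.card = Q ^ s.card := by
    have := coeff_prod_of_natDegree_le s (fun j => (C Q * X - C (t j))) 1
      (fun j _ => by compute_degree)
    rw [mul_one] at this
    rw [hf, this]
    simp [coeff_X, coeff_C]
  have hgc : g.coeff s.card = 1 := by
    have := coeff_prod_of_natDegree_le s (fun j => (X - C (t j))) 1
      (fun j _ => by compute_degree)
    rw [mul_one] at this
    rw [hg, this]
    simp [coeff_X, coeff_C]
  have h0 : (f - g).coeff 0 = 0 := by
    rw [coeff_zero_eq_eval_zero, hf, hg]
    simp [eval_prod]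
  rcases Finset.eq_empty_or_nonempty s with rfl | hs
  · simp
  have hc : 0 < s.card := Finset.card_pos.mpr hs
  set w := (f - g).divX with hw
  have hwX : w * X = f - g := by
    have := divX_mul_X_add (f - g)
    rw [h0] at this
    simpa using this
  have hwd : w.degree < s.card := by
    rw [degree_lt_iff_coeff_zero]
    intro m hm
    rw [hw, coeff_divX]
    apply coeff_eq_zero_of_natDegree_lt
    have := natDegree_sub_le f g
    have : (f-g).natDegree ≤ s.card := this.trans (max_le hfd hgd)
    omega
  have key := Lagrange.coeff_eq_sum ht hwd
  have hl : w.coeff (s.card - 1) = Q ^ s.card - 1 := by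
    rw [hw, coeff_divX, Nat.sub_add_cancel hc, coeff_sub, hfc, hgc]
  rw [hl] at key
  rw [key, Finset.mul_sum]
  refine Finset.sum_congr rfl fun k hk => ?_
  have hwk : w.eval (t k) = (Q - 1) * ∏ j ∈ s.erase k, (Q * t k - t j) := by
    have e := congrArg (eval (t k)) hwX
    rw [eval_mul, eval_X, eval_sub, hf, hg, eval_prod, eval_prod] at e
    rw [Finset.prod_eq_zero (f := fun j => eval (t k) (X - C (t j))) hk (by simp)] at e
    rw [← Finset.mul_prod_erase _ _ hk] at e
    simp only [eval_sub, eval_mul, eval_X, eval_C, sub_zero] at e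
    have := ht0 k hk
    apply mul_right_cancel₀ this
    rw [e]; ring
  rw [hwk, Finset.prod_div_distrib]
  ring

/-- partial sums in closed form -/
noncomputable def WW (Q : ℂ) (t : ℕ → ℂ) (n m i : ℕ) : ℂ :=
  ∑ k ∈ Finset.Ico i n, t k ^ m *
    ∏ j ∈ (Finset.Ico i n).erase k, ((Q * t k - t j) / (t k - t j))

theorem WW_top (Q : ℂ) (t : ℕ → ℂ) (n m : ℕ) : WW Q t n m n = 0 := by simp [WW]

theorem WW_rec (Q : ℂ) (t : ℕ → ℂ) (n m i : ℕ) (hi : i < n)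
    (ht : Set.InjOn t (Finset.Ico 0 n)) :
    WW Q t n (m+1) i - Q * WW Q t n (m+1) (i+1) = t i * (WW Q t n m i - WW Q t n m (i+1)) := by
  have hins : Finset.Ico i n = insert i (Finset.Ico (i+1) n) := by
    ext x; simp; omega
  have hni : i ∉ Finset.Ico (i+1) n := by simp
  have hk : ∀ m', WW Q t n m' i = t i ^ m' * ∏ j ∈ Finset.Ico (i+1) n, ((Q * t i - t j) / (t i - t j))
      + ∑ k ∈ Finset.Ico (i+1) n, t k ^ m' * ((Q * t k - t i) / (t k - t i) *
        ∏ j ∈ (Finset.Ico (i+1) n).erase k, ((Q * t k - t j) / (t k - t j))) := by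
    intro m'
    unfold WW
    rw [hins, Finset.sum_insert hni, Finset.erase_insert hni]
    congr 1
    refine Finset.sum_congr rfl fun k hk => ?_
    have hne : k ≠ i := fun h => hni (h ▸ hk)
    rw [Finset.erase_insert_of_ne hne.symm, Finset.prod_insert]
    intro h
    exact hni (Finset.mem_of_mem_erase h)
  rw [hk, hk]
  unfold WW
  rw [add_sub_assoc, Finset.mul_sum, ← Finset.sum_sub_distrib, add_sub_assoc,
    ← Finset.sum_sub_distrib, mul_add, Finset.mul_sum]
  congr 1
  · ring
  · refine Finset.sum_congr rfl fun k hk => ?_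
    have hne : t k - t i ≠ 0 := by
      rw [sub_ne_zero]
      intro h
      have hk' := Finset.mem_Ico.mp hk
      have := ht (by simp; omega) (by simp; omega) h
      omega
    field_simp
    ring

theorem WW_zero (Q : ℂ) (hQ : Q ≠ 1) (t : ℕ → ℂ) (n i : ℕ) (hi : i < n)
    (ht : Set.InjOn t (Finset.Ico 0 n)) (ht0 : ∀ i < n, t i ≠ 0) :
    WW Q t n 0 i - WW Q t n 0 (i+1) = Q ^ (n - 1 - i) := by
  have key : ∀ i, (Q - 1) * WW Q t n 0 i = Q ^ (n - i) - 1 := by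
    intro i
    have := sum_prod_ratio (Finset.Ico i n) t Q (fun j hj => ht0 j (Finset.mem_Ico.mp hj).2)
      (ht.mono (by intro x; simp))
    simpa [WW] using this
  have h1 := key i
  have h2 := key (i+1)
  have e : n - i = (n - 1 - i) + 1 := by omega
  have e2 : n - (i+1) = (n - 1 - i) := by omega
  rw [e, pow_succ] at h1
  rw [e2] at h2
  apply mul_left_cancel₀ (sub_ne_zero.mpr hQ)
  linear_combination h1 - h2

theorem vec_rec {V : Type*} [AddCommGroup V] [Module ℂ V] (Q : ℂ) (u w : ℕ → V) (n j : ℕ)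
    (hj : j < n)
    (h : ∀ k, j < k → k < n → Q ^ (n - 1 - k) • u k =
      (Q ^ (n - 1 - k) * (Q - 1)) • ∑ y ∈ Finset.range k, u y - (Q - 1) • (w k - w (k+1))) :
    ∑ y ∈ Finset.range n, u y = Q ^ (n - 1 - j) • ∑ y ∈ Finset.range (j+1), u y
      - (Q - 1) • (w (j+1) - w n) := by
  have key : ∀ k, j + 1 ≤ k → k ≤ n → Q ^ (n - k) • ∑ y ∈ Finset.range k, u y =
      Q ^ (n - 1 - j) • ∑ y ∈ Finset.range (j+1), u y - (Q - 1) • (w (j+1) - w k) := by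
    intro k hk
    induction k, hk using Nat.le_induction with
    | base => intro _; rw [show n - (j+1) = n - 1 - j by omega]; simp
    | succ k hk ih =>
      intro hkn
      have ih' := ih (by omega)
      rw [Finset.sum_range_succ, smul_add, show n - (k+1) = n - 1 - k by omega,
        h k (by omega) (by omega)]
      rw [show n - k = (n - 1 - k) + 1 by omega] at ih'
      have e : Q ^ (n - 1 - k) • ∑ y ∈ Finset.range k, u y + ((Q ^ (n - 1 - k) * (Q - 1)) •
        ∑ y ∈ Finset.range k, u y - (Q - 1) • (w k - w (k+1))) =
        Q ^ (n - 1 - k + 1) • ∑ y ∈ Finset.range k, u y - (Q - 1) • (w k - w (k+1)) := by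
        module
      rw [e, ih']
      module
  simpa using key n (by omega) le_rfl

end Scal
section HW

variable {n : ℕ} {A : Type*} [Ring A] [Algebra ℂ A] {V : Type*} [AddCommGroup V] [Module ℂ V]
  [Module A V] [IsScalarTower ℂ A V]

theorem hw_step (q : ℂ) (hq : q ≠ 0) (l X : Matrix (Fin n) (Fin n) A)
    (hG : GRel q⁻¹ (fun a b : Fin n => b < a) l X)
    (hl : ∀ i j, i < j → l i j = 0) (ξ : V) (i j : Fin n) (hij : i ≤ j) (w : ℕ → V)
    (h0 : ∀ k, j < k → X i k • ξ = 0)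
    (hw : ∀ k : Fin n, j < k → l i j • X k k • ξ =
      ((q ^ 2) ^ (n - 1 - (k : ℕ)))⁻¹ • (w k - w (k + 1))) :
    (X * l) i j • ξ = (q ^ 2) ^ (n - 1 - (j : ℕ)) • (X i j • l j j • ξ)
      - (q ^ 2 - 1) • (w (j + 1) - w n) := by
  set u : ℕ → V := fun y => if h : y < n then (X i ⟨y, h⟩ * l ⟨y, h⟩ j) • ξ else 0 with hu
  have hufin : ∀ y : Fin n, u y = (X i y * l y j) • ξ := by
    intro y; simp [hu]
  have hS : ∀ k ≤ n, ∑ y ∈ Finset.range k, u y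
      = ∑ y : Fin n, if (y : ℕ) < k then (X i y * l y j) • ξ else 0 := by
    intro k hk
    have : Finset.range k = (Finset.range n).filter (fun y => y < k) := by
      ext y; simp; omega
    rw [this, Finset.sum_filter, Finset.sum_range]
    simp only [hufin]
  have hrec := vec_rec (q ^ 2) u w n j j.2 (by
    intro k hjk hkn
    have e := congrArg (fun z : A => z • ξ) (hG ⟨k, hkn⟩ j i ⟨k, hkn⟩)
    have hjk' : j < (⟨k, hkn⟩ : Fin n) := hjk
    have hik' : i < (⟨k, hkn⟩ : Fin n) := lt_of_le_of_lt hij hjk'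
    have hw' := hw _ hjk'
    simp only [if_neg hik'.ne', hik', if_true, one_smul, add_smul, mul_smul, smul_assoc, h0 _ hjk', hw',
      smul_zero, zero_add, Finset.sum_smul] at e
    have e2 : ∑ y : Fin n, (if y < (⟨k, hkn⟩ : Fin n) then (q⁻¹ - q⁻¹⁻¹) • (X i y * l y j) else 0) • ξ
        = (q⁻¹ - q) • ∑ y ∈ Finset.range k, u y := by
      rw [hS k hkn.le, Finset.smul_sum]
      refine Finset.sum_congr rfl fun y _ => ?_
      by_cases hy : y < (⟨k, hkn⟩ : Fin n)
      · rw [if_pos hy, if_pos (show (y : ℕ) < k from hy), inv_inv, smul_assoc]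
      · rw [if_neg hy, if_neg (show ¬ (y : ℕ) < k from hy)]; simp
    have hwf : w (((⟨k, hkn⟩ : Fin n) : ℕ) + 1) = w (k + 1) := rfl
    have hwf : w (((⟨k, hkn⟩ : Fin n) : ℕ)) = w k := rfl
    rw [e2, inv_inv, ← mul_smul (X i _), ← hufin ⟨k, hkn⟩] at e
    change (q⁻¹ - q) • ((q ^ 2) ^ (n - 1 - k))⁻¹ • (w k - w (k+1)) = q⁻¹ • u k + _ at e
    have hP : (q ^ 2) ^ (n - 1 - k) ≠ 0 := pow_ne_zero _ (pow_ne_zero _ hq)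
    generalize (q ^ 2) ^ (n - 1 - k) = P at *
    have e3 : u k = q • (q⁻¹ - q) • P⁻¹ • (w k - w (k+1)) -
        q • (q⁻¹ - q) • ∑ y ∈ Finset.range k, u y := by
      rw [e, smul_add, smul_smul q q⁻¹, mul_inv_cancel₀ hq, one_smul]; abel
    rw [e3]
    match_scalars <;> field_simp <;> ring)
  have hT : (X * l) i j • ξ = ∑ y ∈ Finset.range n, u y := by
    rw [Matrix.mul_apply, Finset.sum_smul, Finset.sum_range]
    simp only [hufin]
  rw [hT, hrec]
  congr 2
  rw [Finset.sum_range_succ, Finset.sum_eq_zero, zero_add, hufin, mul_smul]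
  intro y hy
  have hy' := Finset.mem_range.mp hy
  have : y < n := hy'.trans j.2
  have h1 := hufin ⟨y, this⟩
  rw [hl ⟨y, this⟩ j hy'] at h1
  simpa using h1

theorem hw_main_s17 (q : ℂ) (hq : q ≠ 0) (hq1 : q ^ 2 ≠ 1) (lm lp : Matrix (Fin n) (Fin n) A)
    (X : ℕ → Matrix (Fin n) (Fin n) A) (hX0 : X 0 = 1)
    (hX : ∀ m, X (m + 1) * lm = X m * lp)
    (hG : ∀ m, GRel q⁻¹ (fun a b : Fin n => b < a) lm (X m))
    (hl : ∀ i j, i < j → lm i j = 0) (hlp : ∀ i j, i < j → lp j i = 0)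
    (ξ : V) (lam : Fin n → ℤ)
    (h1 : ∀ i j, i < j → lp i j • ξ = 0)
    (h2 : ∀ i, lm i i • ξ = (q ^ lam i) • ξ)
    (h3 : ∀ i, lp i i • ξ = (q ^ (- lam i)) • ξ)
    (t : ℕ → ℂ) (ht : Set.InjOn t (Finset.Ico 0 n))
    (htl : ∀ i : Fin n, t i = q ^ (-(2 * (lam i + n - 1 - i)))) (m : ℕ) :
    (∀ i j, i < j → X m i j • ξ = 0) ∧ ∀ i : Fin n, X m i i • ξ =
      (((q ^ 2) ^ (n - 1 - (i : ℕ)))⁻¹ *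
        (WW (q ^ 2) t n m i - WW (q ^ 2) t n m (i + 1))) • ξ := by
  have hQ0 : ∀ k, (q ^ 2) ^ k ≠ 0 := fun k => pow_ne_zero _ (pow_ne_zero _ hq)
  have ht0 : ∀ i < n, t i ≠ 0 := by
    intro i hi
    have := htl ⟨i, hi⟩
    simp only at this
    rw [this]
    exact zpow_ne_zero _ hq
  induction m with
  | zero =>
    rw [hX0]
    refine ⟨fun i j hij => by simp [Matrix.one_apply, hij.ne], fun i => ?_⟩
    rw [WW_zero _ hq1 _ _ _ i.2 ht ht0, inv_mul_cancel₀ (hQ0 _)]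
    simp
  | succ m ih =>
    obtain ⟨ih1, ih2⟩ := ih
    have hr : ∀ i j, (X (m+1) * lm) i j • ξ = q ^ (-lam j) • X m i j • ξ := by
      intro i j
      rw [hX, Matrix.mul_apply, Finset.sum_smul, Finset.sum_eq_single j]
      · rw [mul_smul, h3, smul_algebra_smul_comm]
      · intro k _ hk
        rcases lt_or_gt_of_ne hk with h | h
        · rw [mul_smul, h1 _ _ h, smul_zero]
        · rw [hlp _ _ h]; simp
      · simp
    have hY1 : ∀ d : ℕ, ∀ i j : Fin n, n ≤ j + d → i < j → X (m+1) i j • ξ = 0 := by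
      intro d
      induction d with
      | zero => intro i j h; exact absurd j.2 (by omega)
      | succ d ihd =>
        intro i j h hij
        have hs := hw_step q hq lm (X (m+1)) (hG _) hl ξ i j hij.le (fun _ => 0)
          (fun k hk => ihd i k (by have : (j : ℕ) < k := hk; omega) (hij.trans hk))
          (fun k hk => by rw [hl _ _ hij]; simp)
        rw [hr, ih1 _ _ hij, h2, smul_algebra_smul_comm] at hs
        simp only [smul_zero, sub_zero] at hs
        have hs := hs.symm
        rw [smul_eq_zero_iff_right (hQ0 _), smul_eq_zero_iff_right (zpow_ne_zero _ hq)] at hs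
        exact hs
    have hY1' : ∀ i j : Fin n, i < j → X (m+1) i j • ξ = 0 :=
      fun i j => hY1 n i j (by omega)
    refine ⟨hY1', ?_⟩
    have hY2 : ∀ d : ℕ, ∀ i : Fin n, n ≤ i + d → X (m+1) i i • ξ =
      (((q ^ 2) ^ (n - 1 - (i : ℕ)))⁻¹ *
        (WW (q ^ 2) t n (m+1) i - WW (q ^ 2) t n (m+1) (i + 1))) • ξ := by
      intro d
      induction d with
      | zero => intro i h; exact absurd i.2 (by omega)
      | succ d ihd =>
        intro i h
        have hs := hw_step q hq lm (X (m+1)) (hG _) hl ξ i i le_rfl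
          (fun k => (q ^ lam i * WW (q ^ 2) t n (m+1) k) • ξ)
          (fun k hk => hY1' i k hk)
          (fun k hk => by
            rw [ihd k (by have : (i : ℕ) < k := hk; omega), smul_algebra_smul_comm, h2]
            module)
        rw [hr, ih2, h2, smul_algebra_smul_comm (q ^ lam i) (X (m+1) i i) ξ, WW_top] at hs
        have hrec := WW_rec (q ^ 2) t n m i i.2 ht
        have ht' : t i = (q ^ lam i)⁻¹ * (q ^ lam i)⁻¹ * ((q ^ 2) ^ (n - 1 - (i : ℕ)))⁻¹ := by
          rw [htl, ← pow_mul, ← zpow_natCast, ← _root_.zpow_neg, ← _root_.zpow_neg, ← zpow_add₀ hq,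
            ← zpow_add₀ hq]
          congr 1
          have : ((n - 1 - (i : ℕ) : ℕ) : ℤ) = n - 1 - i := by omega
          push_cast [this]
          ring
        rw [_root_.zpow_neg] at hs
        have hqi : q ^ lam i ≠ 0 := zpow_ne_zero _ hq
        have hP := hQ0 (n - 1 - (i : ℕ))
        generalize (q ^ 2) ^ (n - 1 - (i : ℕ)) = P at *
        generalize q ^ lam i = z at *
        have hx : X (m+1) i i • ξ = z⁻¹ • P⁻¹ • (P • z • X (m+1) i i • ξ) := by
          rw [smul_smul P⁻¹, inv_mul_cancel₀ hP, one_smul, smul_smul, inv_mul_cancel₀ hqi, one_smul]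
        rw [hx, eq_add_of_sub_eq hs.symm]
        simp only [← sub_smul, ← add_smul, smul_smul]
        congr 1
        rw [ht'] at hrec
        field_simp at hrec ⊢
        linear_combination (-1 : ℂ) * hrec
    exact fun i => hY2 n i (by omega)

end HW
section Assembly

theorem exch_ring {B : Type*} [Ring B] (R a b c ci : B) (h1 : R * a * b = b * a * R)
    (h2 : R * a * c = c * a * R) (hc1 : c * ci = 1) (hc2 : ci * c = 1) :
    R * (a * (b * ci)) = (b * ci) * (R * a) := by
  have h3 : a * R * ci = ci * R * a := by
    calc a * R * ci = (ci * c) * (a * R * ci) := by rw [hc2, one_mul]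
      _ = ci * (c * a * R) * ci := by noncomm_ring
      _ = ci * (R * a * c) * ci := by rw [h2]
      _ = ci * R * a * (c * ci) := by noncomm_ring
      _ = ci * R * a := by rw [hc1, mul_one]
  calc R * (a * (b * ci)) = R * a * b * ci := by noncomm_ring
    _ = b * (a * R * ci) := by rw [h1]; noncomm_ring
    _ = (b * ci) * (R * a) := by rw [h3]; noncomm_ring

theorem exch_inv {B : Type*} [Ring B] (R Ri a b : B) (h : R * b * a = a * b * R)
    (hr1 : R * Ri = 1) (hr2 : Ri * R = 1) : Ri * a * b = b * a * Ri := by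
  calc Ri * a * b = Ri * a * b * (R * Ri) := by rw [hr1, mul_one]
    _ = Ri * (a * b * R) * Ri := by noncomm_ring
    _ = Ri * (R * b * a) * Ri := by rw [h]
    _ = (Ri * R) * (b * a * Ri) := by noncomm_ring
    _ = _ := by rw [hr2, one_mul]

theorem exch_pow {B : Type*} [Ring B] (R a x : B) (h : R * (a * x) = x * (R * a)) (m : ℕ) :
    R * (a * x ^ m) = x ^ m * (R * a) := by
  rw [← mul_assoc] at h ⊢
  exact ((show SemiconjBy (R * a) x x from h).pow_right m)

theorem leg2_pow {n : ℕ} {A : Type*} [Ring A] [Algebra ℂ A] (X : Matrix (Fin n) (Fin n) A) (m : ℕ) :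
    (leg2 (X ^ m) : Matrix (Fin n × Fin n) (Fin n × Fin n) A) = (leg2 X) ^ m := by
  induction m with
  | zero => rw [pow_zero, pow_zero]; exact leg2_one
  | succ m ih => rw [pow_succ, pow_succ, ← ih]; exact (leg2_mul_leg2 _ _).symm

theorem leg1_swap {n : ℕ} {A : Type*} [Ring A] (l : Fin n → Fin n → A) :
    (leg1 l).submatrix Prod.swap Prod.swap = leg2 l := by
  ext ⟨a, c⟩ ⟨b, d⟩
  simp [leg1, leg2]

theorem leg2_swap {n : ℕ} {A : Type*} [Ring A] (l : Fin n → Fin n → A) :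
    (leg2 l).submatrix Prod.swap Prod.swap = leg1 l := by
  ext ⟨a, c⟩ ⟨b, d⟩
  simp [leg1, leg2]

theorem Rg_swap {n : ℕ} {A : Type*} [Ring A] [Algebra ℂ A] (q : ℂ) :
    (Rg q (fun a b : Fin n => a < b) A).submatrix Prod.swap Prod.swap
      = Rg q (fun a b : Fin n => b < a) A := by
  ext ⟨a, c⟩ ⟨b, d⟩
  simp only [Rg, Matrix.submatrix_apply, Prod.swap_prod_mk, Prod.mk.injEq]
  congr 2
  · simp only [@eq_comm _ c a, and_comm]
  · congr 1
    apply propext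
    tauto

theorem swap_mul {n : ℕ} {A : Type*} [Ring A] (M N : Matrix (Fin n × Fin n) (Fin n × Fin n) A) :
    (M * N).submatrix Prod.swap Prod.swap =
      M.submatrix Prod.swap Prod.swap * N.submatrix Prod.swap Prod.swap :=
  Matrix.submatrix_mul M N _ _ _ Prod.swap_bijective

variable (q : ℂ) (n : ℕ)

theorem map_leg1 (p : Bool) :
    (leg1 (gl n p)).map (RingQuot.mkAlgHom ℂ (relGL q n)) = leg1 (lG q n p) := by
  ext ⟨a, c⟩ ⟨b, d⟩
  simp only [Matrix.map_apply, leg1, lG]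
  split_ifs <;> simp

theorem map_leg2 (p : Bool) :
    (leg2 (gl n p)).map (RingQuot.mkAlgHom ℂ (relGL q n)) = leg2 (lG q n p) := by
  ext ⟨a, c⟩ ⟨b, d⟩
  simp only [Matrix.map_apply, leg2, lG]
  split_ifs <;> simp

theorem map_R :
    (RcGL q n).map (RingQuot.mkAlgHom ℂ (relGL q n)) =
      Rg q (fun a b : Fin n => a < b) (UqGL q n) := by
  ext p s
  simp only [Matrix.map_apply, RcGL, Rg, Rmat]
  exact AlgHom.commutes _ _

theorem rll_U (p : Bool) : Rg q (fun a b : Fin n => a < b) (UqGL q n) * leg1 (lG q n p) * leg2 (lG q n p)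
    = leg2 (lG q n p) * leg1 (lG q n p) * Rg q (fun a b : Fin n => a < b) (UqGL q n) := by
  rw [← map_R, ← map_leg1, ← map_leg2]
  simp only [← Matrix.map_mul]
  ext v w
  exact RingQuot.mkAlgHom_rel ℂ (relGL.rll p v w)

theorem rll_pm_U : Rg q (fun a b : Fin n => a < b) (UqGL q n) * leg1 (lG q n true) * leg2 (lG q n false)
    = leg2 (lG q n false) * leg1 (lG q n true) * Rg q (fun a b : Fin n => a < b) (UqGL q n) := by
  rw [← map_R, ← map_leg1, ← map_leg2]
  simp only [← Matrix.map_mul]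
  ext v w
  exact RingQuot.mkAlgHom_rel ℂ (relGL.rll_pm v w)

theorem leg2_mul' {n : ℕ} {A : Type*} [Ring A] [Algebra ℂ A] (X Y : Matrix (Fin n) (Fin n) A) :
    (leg2 (X * Y) : Matrix (Fin n × Fin n) (Fin n × Fin n) A) = leg2 X * leg2 Y :=
  (leg2_mul_leg2 X Y).symm

theorem GRel_plus (Lminv : Matrix (Fin n) (Fin n) (UqGL q n))
    (hLm1 : LM q n false * Lminv = 1) (hLm2 : Lminv * LM q n false = 1) (m : ℕ) :
    GRel q (fun a b : Fin n => a < b) (lG q n true) ((LM q n true * Lminv) ^ m) := by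
  apply GRel_of
  have hX : (leg2 ((LM q n true * Lminv) ^ m) : Matrix (Fin n × Fin n) (Fin n × Fin n) (UqGL q n))
      = (leg2 (lG q n true) * leg2 Lminv) ^ m :=
    (leg2_pow _ _).trans (congrArg (· ^ m) (leg2_mul' _ _))
  have hc1 : (leg2 (lG q n false) * leg2 Lminv : Matrix (Fin n × Fin n) (Fin n × Fin n) (UqGL q n)) = 1 :=
    (leg2_mul_leg2 (LM q n false) Lminv).trans ((congrArg leg2 hLm1).trans leg2_one)
  have hc2 : (leg2 Lminv * leg2 (lG q n false) : Matrix (Fin n × Fin n) (Fin n × Fin n) (UqGL q n)) = 1 :=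
    (leg2_mul_leg2 Lminv (LM q n false)).trans ((congrArg leg2 hLm2).trans leg2_one)
  have := exch_pow _ _ _ (exch_ring _ _ _ _ _ (rll_U q n true) (rll_pm_U q n) hc1 hc2) m
  rw [← hX] at this
  exact this

theorem GRel_minus (hq : q ≠ 0) (Lminv : Matrix (Fin n) (Fin n) (UqGL q n))
    (hLm1 : LM q n false * Lminv = 1) (hLm2 : Lminv * LM q n false = 1) (m : ℕ) :
    GRel q⁻¹ (fun a b : Fin n => b < a) (lG q n false) ((LM q n true * Lminv) ^ m) := by
  apply GRel_of
  have hX : (leg2 ((LM q n true * Lminv) ^ m) : Matrix (Fin n × Fin n) (Fin n × Fin n) (UqGL q n))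
      = (leg2 (lG q n true) * leg2 Lminv) ^ m :=
    (leg2_pow _ _).trans (congrArg (· ^ m) (leg2_mul' _ _))
  have hc1 : (leg2 (lG q n false) * leg2 Lminv : Matrix (Fin n × Fin n) (Fin n × Fin n) (UqGL q n)) = 1 :=
    (leg2_mul_leg2 (LM q n false) Lminv).trans ((congrArg leg2 hLm1).trans leg2_one)
  have hc2 : (leg2 Lminv * leg2 (lG q n false) : Matrix (Fin n × Fin n) (Fin n × Fin n) (UqGL q n)) = 1 :=
    (leg2_mul_leg2 Lminv (LM q n false)).trans ((congrArg leg2 hLm2).trans leg2_one)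
  have e1 := congrArg (fun M => M.submatrix Prod.swap Prod.swap) (rll_pm_U q n)
  have e2 := congrArg (fun M => M.submatrix Prod.swap Prod.swap) (rll_U q n false)
  simp only [swap_mul, leg1_swap, leg2_swap, Rg_swap] at e1 e2
  have hr1 := Rg_inv (n := n) (A := UqGL q n) q hq (fun a b => b < a) (fun a b h => h.asymm)
  have hr2 := Rg_inv (n := n) (A := UqGL q n) q⁻¹ (inv_ne_zero hq) (fun a b => b < a)
    (fun a b h => h.asymm)
  rw [inv_inv] at hr2
  have := exch_pow _ _ _ (exch_ring _ _ _ _ _ (exch_inv _ _ _ _ e1 hr1 hr2)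
    (exch_inv _ _ _ _ e2 hr1 hr2) hc1 hc2) m
  rw [← hX] at this
  exact this

theorem tele_s17 (E : ℕ → ℂ) (a y : Fin n) (h : a < y) :
    ∑ c : Fin n, (if a < c ∧ c < y then E c - E (c + 1) else 0) = E (a + 1) - E y := by
  have hs := Finset.sum_range (n := n)
    (fun c => if (a : ℕ) < c ∧ c < (y : ℕ) then E c - E (c + 1) else 0)
  have h' : (a : ℕ) < y := h
  have hf : (Finset.range n).filter (fun c => (a : ℕ) < c ∧ c < (y : ℕ)) = Finset.Ico (a + 1 : ℕ) y := by
    ext c; simp; omega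
  rw [← Finset.sum_filter, hf, Finset.sum_Ico_eq_sub _ (by omega), Finset.sum_range_sub',
    Finset.sum_range_sub'] at hs
  simp only [Fin.lt_def]
  rw [← hs]; ring

theorem trace_central (hq : q ≠ 0) (Lminv : Matrix (Fin n) (Fin n) (UqGL q n))
    (hLm1 : LM q n false * Lminv = 1) (hLm2 : Lminv * LM q n false = 1) (m : ℕ) (x : UqGL q n) :
    x * ∑ c : Fin n, (q ^ ((n : ℤ) - 1 - 2 * (c : ℤ))) • ((LM q n true * Lminv) ^ m) c c =
      (∑ c : Fin n, (q ^ ((n : ℤ) - 1 - 2 * (c : ℤ))) • ((LM q n true * Lminv) ^ m) c c) * x := by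
  set E : ℕ → ℂ := fun c => q * q ^ ((n : ℤ) - 1 - 2 * (c : ℤ)) with hE
  have hE1 : ∀ c : ℕ, E (c + 1) = q⁻¹ * q ^ ((n : ℤ) - 1 - 2 * (c : ℤ)) := by
    intro c
    simp only [hE]
    rw [show (n : ℤ) - 1 - 2 * ((c + 1 : ℕ) : ℤ) = ((n : ℤ) - 1 - 2 * (c : ℤ)) - 2 by push_cast; ring,
      zpow_sub₀ hq]
    field_simp
  have hgen : ∀ p i j, lG q n p i j * ∑ c : Fin n, (q ^ ((n : ℤ) - 1 - 2 * (c : ℤ))) • ((LM q n true * Lminv) ^ m) c c =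
      (∑ c : Fin n, (q ^ ((n : ℤ) - 1 - 2 * (c : ℤ))) • ((LM q n true * Lminv) ^ m) c c) * lG q n p i j := by
    have hsum : ∀ a y : Fin n, a < y →
        (q - q⁻¹) * ∑ c : Fin n, (if a < c ∧ c < y then q ^ ((n : ℤ) - 1 - 2 * (c : ℤ)) else 0)
          = E (a + 1) - E y := by
      intro a y hay
      rw [← tele_s17 n E a y hay, Finset.mul_sum]
      refine Finset.sum_congr rfl fun c _ => ?_
      split_ifs
      · rw [hE1]; simp only [hE]; ring
      · simp
    intro p i j
    cases p
    · refine GRel_central q⁻¹ (inv_ne_zero hq) (fun a b : Fin n => b < a) (fun a b h => h.asymm) _ _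
        (fun c : Fin n => q ^ ((n : ℤ) - 1 - 2 * (c : ℤ))) ?_ (fun a b c h1 h2 => h2.trans h1)
        (GRel_minus q n hq Lminv hLm1 hLm2 m) i j
      intro a y hay
      have := hsum y a hay
      simp only [and_comm (a := y < _)] at this
      rw [hE1] at this
      simp only [hE] at this
      rw [inv_inv]
      linear_combination this
    · refine GRel_central q hq (fun a b : Fin n => a < b) (fun a b h => h.asymm) _ _
        (fun c : Fin n => q ^ ((n : ℤ) - 1 - 2 * (c : ℤ))) ?_ (fun a b c h1 h2 => h1.trans h2)
        (GRel_plus q n Lminv hLm1 hLm2 m) i j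
      intro a y hay
      have := hsum a y hay
      rw [hE1] at this
      simp only [hE] at this
      linear_combination (-1 : ℂ) * this
  generalize (∑ c : Fin n, (q ^ ((n : ℤ) - 1 - 2 * (c : ℤ))) • ((LM q n true * Lminv) ^ m) c c) = z at *
  obtain ⟨y, rfl⟩ := RingQuot.mkAlgHom_surjective ℂ (relGL q n) x
  induction y using FreeAlgebra.induction with
  | grade0 r => rw [AlgHom.commutes]; exact Algebra.commutes r z
  | grade1 g => obtain ⟨p, i, j⟩ := g; exact hgen p i j
  | mul a b ha hb => rw [map_mul, mul_assoc, hb, ← mul_assoc, ha, mul_assoc]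
  | add a b ha hb => rw [map_add, add_mul, mul_add, ha, hb]

theorem zpow_inj_of (hq0 : q ≠ 0) (hq : ∀ k : ℕ, k ≠ 0 → q ^ k ≠ 1) (a b : ℤ)
    (h : q ^ a = q ^ b) : a = b := by
  by_contra hne
  have h1 : q ^ (a - b) = 1 := by rw [zpow_sub₀ hq0, h, div_self (zpow_ne_zero _ hq0)]
  have h2 : q ^ (a - b).natAbs = 1 := by
    rw [← zpow_natCast]
    rcases Int.natAbs_eq (a - b) with h | h
    · rw [← h]; exact h1
    · rw [show (((a - b).natAbs : ℕ) : ℤ) = -(a - b) by omega, _root_.zpow_neg, h1, inv_one]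
  exact hq _ (by omega) h2

theorem scalar_final (hq0 : q ≠ 0) (hq : ∀ k : ℕ, k ≠ 0 → q ^ k ≠ 1) (ell : Fin n → ℤ)
    (hdist : Function.Injective ell) (t : ℕ → ℂ) (ht : ∀ i : Fin n, t i = q ^ (-(2 * ell i)))
    (m : ℕ) :
    q ^ (1 - (n : ℤ)) * WW (q ^ 2) t n m 0 =
      ∑ k : Fin n, q ^ (-(2 * ell k * (m : ℤ))) *
          ((∏ j : Fin n, qint q (ell j - ell k + 1)) /
            (∏ j ∈ Finset.univ.erase k, qint q (ell j - ell k))) := by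
  have hh : q - q⁻¹ ≠ 0 := by
    intro h
    apply hq 2 (by norm_num)
    have : q = q⁻¹ := sub_eq_zero.mp h
    rw [pow_two]; nth_rw 2 [this]; exact mul_inv_cancel₀ hq0
  unfold WW
  rw [← Finset.range_eq_Ico, Finset.sum_range, Finset.mul_sum]
  refine Finset.sum_congr rfl fun k _ => ?_
  have her : (Finset.range n).erase (k : ℕ) = (Finset.univ.erase k).map Fin.valEmbedding := by
    ext x
    simp only [Finset.mem_erase, Finset.mem_range, Finset.mem_map, Finset.mem_univ, and_true,
      Fin.valEmbedding_apply]
    constructor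
    · rintro ⟨h1, h2⟩
      exact ⟨⟨x, h2⟩, fun h => h1 (by rw [← h]), rfl⟩
    · rintro ⟨a, h1, rfl⟩
      exact ⟨fun h => h1 (Fin.ext h), a.2⟩
  rw [her, Finset.prod_map]
  have hf : ∀ j ∈ Finset.univ.erase k, (q ^ 2 * t k - t (Fin.valEmbedding j)) / (t k - t (Fin.valEmbedding j))
      = q * (qint q (ell j - ell k + 1) / qint q (ell j - ell k)) := by
    intro j hj
    have hjk : ell j ≠ ell k := fun h => (Finset.ne_of_mem_erase hj) (hdist h)
    have hne : ∀ a b : ℤ, a ≠ b → q ^ a - q ^ b ≠ 0 := fun a b h h' =>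
      h (zpow_inj_of q hq0 hq a b (sub_eq_zero.mp h'))
    rw [Fin.valEmbedding_apply, ht, ht]
    unfold qint
    rw [div_div_div_cancel_right₀ hh, mul_div_assoc', div_eq_div_iff (hne _ _ (by omega)) (hne _ _ (by omega))]
    have e1 : ∀ a : ℤ, q ^ (-(2 * a)) = (q ^ a)⁻¹ * (q ^ a)⁻¹ := by
      intro a
      rw [← _root_.zpow_neg, ← zpow_add₀ hq0]; congr 1; ring
    rw [e1, e1, _root_.zpow_neg, _root_.zpow_neg, zpow_add₀ hq0, zpow_sub₀ hq0, zpow_one]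
    have hx : q ^ ell j ≠ 0 := zpow_ne_zero _ hq0
    have hy : q ^ ell k ≠ 0 := zpow_ne_zero _ hq0
    generalize q ^ ell j = x at *
    generalize q ^ ell k = y at *
    field_simp
    try ring
  rw [Finset.prod_congr rfl hf, Finset.prod_mul_distrib, Finset.prod_const,
    Finset.card_erase_of_mem (Finset.mem_univ _), Finset.card_univ, Fintype.card_fin,
    Finset.prod_div_distrib, ← Finset.mul_prod_erase Finset.univ _ (Finset.mem_univ k)]
  have h1 : qint q (ell k - ell k + 1) = 1 := by
    unfold qint
    rw [sub_self, zero_add, zpow_one, _root_.zpow_neg_one, div_self hh]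
  have hn : 0 < n := k.pos
  have h2 : q ^ (1 - (n : ℤ)) * q ^ (n - 1) = 1 := by
    rw [← zpow_natCast, ← zpow_add₀ hq0]
    rw [show (1 - (n : ℤ)) + ((n - 1 : ℕ) : ℤ) = 0 by omega, zpow_zero]
  rw [h1, one_mul, ht, ← zpow_natCast _ m, ← _root_.zpow_mul]
  rw [show -(2 * ell k) * (m : ℤ) = -(2 * ell k * m) by ring]
  linear_combination (q ^ (-(2 * ell k * (m : ℤ))) * ((∏ j ∈ Finset.univ.erase k, qint q (ell j - ell k + 1)) /
            (∏ j ∈ Finset.univ.erase k, qint q (ell j - ell k)))) * h2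

end Assembly

/-- The eigenvalue of the central element `tr(D(L⁺(L⁻)⁻¹)^m)` in `L_q(λ)`. -/
theorem stmt_17 (n : ℕ) (hn : 1 ≤ n) (q : ℂ) (hq0 : q ≠ 0)
    (hq : ∀ k : ℕ, k ≠ 0 → q ^ k ≠ 1)
    (lam : Fin n → ℤ) (ell : Fin n → ℤ)
    (hell : ∀ i : Fin n, ell i = lam i + (n : ℤ) - 1 - (i : ℤ))
    (hdist : Function.Injective ell)
    (Lminv : Matrix (Fin n) (Fin n) (UqGL q n))
    (hLm1 : LM q n false * Lminv = 1) (hLm2 : Lminv * LM q n false = 1)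
    (V : Type*) [AddCommGroup V] [Module (UqGL q n) V]
    (hirr : IsSimpleModule (UqGL q n) V)
    (ξ : V) (hξ : ξ ≠ 0)
    (hhw1 : ∀ i j : Fin n, i < j → lG q n true i j • ξ = 0)
    (hhw2 : ∀ i : Fin n, lG q n false i i • ξ = algebraMap ℂ (UqGL q n) (q ^ (lam i)) • ξ)
    (m : ℕ) (hm : 1 ≤ m) (v : V) :
    Matrix.trace (Dmat q n (UqGL q n) * (LM q n true * Lminv) ^ m) • v =
      algebraMap ℂ (UqGL q n)
        (∑ k : Fin n, q ^ (-(2 * ell k * (m : ℤ))) *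
          ((∏ j : Fin n, qint q (ell j - ell k + 1)) /
            (∏ j ∈ Finset.univ.erase k, qint q (ell j - ell k)))) • v := by
  letI : Module ℂ V := Module.compHom V (algebraMap ℂ (UqGL q n))
  have hsm : ∀ (c : ℂ) (x : V), c • x = algebraMap ℂ (UqGL q n) c • x := fun c x => rfl
  haveI : IsScalarTower ℂ (UqGL q n) V := ⟨fun c a x => by
    rw [hsm, Algebra.smul_def, mul_smul]⟩
  set S : ℂ := (∑ k : Fin n, q ^ (-(2 * ell k * (m : ℤ))) *
          ((∏ j : Fin n, qint q (ell j - ell k + 1)) /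
            (∏ j ∈ Finset.univ.erase k, qint q (ell j - ell k)))) with hS
  have htrace : Matrix.trace (Dmat q n (UqGL q n) * (LM q n true * Lminv) ^ m) =
      ∑ c : Fin n, (q ^ ((n : ℤ) - 1 - 2 * (c : ℤ))) • ((LM q n true * Lminv) ^ m) c c := by
    simp only [Matrix.trace, Dmat, Matrix.diag_apply, Matrix.diagonal_mul, Algebra.smul_def]
  have hcent := trace_central q n hq0 Lminv hLm1 hLm2 m
  rw [← htrace] at hcent
  have hrel : ∀ {x y}, relGL q n x y →
      RingQuot.mkAlgHom ℂ (relGL q n) x = RingQuot.mkAlgHom ℂ (relGL q n) y :=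
    fun h => RingQuot.mkAlgHom_rel ℂ h
  have hq1 : q ^ 2 ≠ 1 := hq 2 (by norm_num)
  set t : ℕ → ℂ := fun k => if h : k < n then q ^ (-(2 * ell ⟨k, h⟩)) else 0 with ht
  have htf : ∀ i : Fin n, t i = q ^ (-(2 * ell i)) := by
    intro i; simp [ht]
  have htinj : Set.InjOn t (Finset.Ico 0 n) := by
    intro a ha b hb hab
    have ha' : a < n := by simpa using ha
    have hb' : b < n := by simpa using hb
    have h1 := htf ⟨a, ha'⟩
    have h2 := htf ⟨b, hb'⟩
    simp only at h1 h2
    rw [h1, h2] at hab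
    have := zpow_inj_of q hq0 hq _ _ hab
    have := hdist (show ell ⟨a, ha'⟩ = ell ⟨b, hb'⟩ by omega)
    simpa using this
  have hmain := hw_main_s17 (V := V) q hq0 hq1 (LM q n false) (LM q n true)
    (fun m => (LM q n true * Lminv) ^ m) (pow_zero _)
    (fun m => by
      rw [pow_succ, Matrix.mul_assoc, Matrix.mul_assoc, hLm2, Matrix.mul_one])
    (fun m => GRel_minus q n hq0 Lminv hLm1 hLm2 m)
    (fun i j h => by
      have := hrel (relGL.tri_minus h)
      rwa [map_zero] at this)
    (fun i j h => by
      have := hrel (relGL.tri_plus h)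
      rwa [map_zero] at this)
    ξ lam hhw1 hhw2
    (fun i => by
      have h1 := hrel (relGL.diag_pm i)
      rw [map_mul, map_one] at h1
      have h2 : lG q n true i i • lG q n false i i • ξ = ξ := by
        rw [← mul_smul]
        exact (congrArg (· • ξ) h1).trans (one_smul _ _)
      rw [hhw2, ← hsm, smul_algebra_smul_comm (q ^ lam i) (lG q n true i i) ξ] at h2
      have h3 : q ^ (-lam i) • ξ = lG q n true i i • ξ := by
        rw [← h2, smul_smul, ← zpow_add₀ hq0, neg_add_cancel, zpow_zero, one_smul, h2]
      exact h3.symm)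
    t htinj (fun i => by rw [htf, hell]) m
  have hξS : Matrix.trace (Dmat q n (UqGL q n) * (LM q n true * Lminv) ^ m) • ξ = S • ξ := by
    rw [htrace, Finset.sum_smul, hS, ← scalar_final q n hq0 hq ell hdist t htf m]
    have hterm : ∀ i : Fin n,
        ((q ^ ((n : ℤ) - 1 - 2 * (i : ℤ))) • ((LM q n true * Lminv) ^ m) i i) • ξ =
        (q ^ (1 - (n : ℤ)) * (WW (q ^ 2) t n m i - WW (q ^ 2) t n m (i + 1))) • ξ := by
      intro i
      have h2 := hmain.2 i
      rw [smul_assoc, h2, smul_smul, ← mul_assoc]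
      congr 2
      rw [← pow_mul, ← zpow_natCast, ← _root_.zpow_neg, ← zpow_add₀ hq0]
      congr 1
      have : ((n - 1 - (i : ℕ) : ℕ) : ℤ) = n - 1 - i := by omega
      push_cast [this]
      ring
    rw [Finset.sum_congr rfl fun i _ => hterm i, ← Finset.sum_smul, ← Finset.mul_sum]
    rw [← Finset.sum_range (fun i => WW (q ^ 2) t n m i - WW (q ^ 2) t n m (i + 1)),
      Finset.sum_range_sub', WW_top, sub_zero]
  change _ = S • v
  generalize Matrix.trace (Dmat q n (UqGL q n) * (LM q n true * Lminv) ^ m) = z at *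
  let N : Submodule (UqGL q n) V :=
    { carrier := {x | z • x = S • x}
      add_mem' := by
        intro a b ha hb
        simp only [Set.mem_ofPred_eq] at *
        rw [smul_add, smul_add, ha, hb]
      zero_mem' := by simp
      smul_mem' := by
        intro c x hx
        simp only [Set.mem_ofPred_eq] at *
        rw [← mul_smul, ← hcent c, mul_smul, hx, smul_algebra_smul_comm] }
  have hN : N = ⊤ := by
    rcases eq_bot_or_eq_top N with h | h
    · have : ξ ∈ N := hξS
      rw [h, Submodule.mem_bot] at this
      exact absurd this hξ
    · exact h
  have : v ∈ N := by rw [hN]; trivial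
  exact this
end

section
/- Let ξ be the highest weight vector of the module L_q(λ). Then for every complex number u, ∑_{σ∈S_n} (−q)^{−l(σ)} · (l⁺_{σ(1)1} − uq^{2n−2}·l⁻_{σ(1)1}) · (l⁺_{σ(2)2} − uq^{2n−4}·l⁻_{σ(2)2}) ⋯ (l⁺_{σ(n)n} − u·l⁻_{σ(n)n}) · ξ = ∏_{i=1}^n (q^{−λ_i} − q^{λ_i + 2n − 2i}·u) · ξ, where l(σ) is the length of the permutation σ. -/
open Matrix

theorem aux_prod {A : Type*} [Ring A] [Algebra ℂ A] {V : Type*} [AddCommGroup V] [Module A V]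
    (ξ : V) : ∀ (n : ℕ) (f : Fin n → A) (c : Fin n → ℂ),
    (∀ i, f i • ξ = algebraMap ℂ A (c i) • ξ) →
    (List.ofFn f).prod • ξ = algebraMap ℂ A (∏ i, c i) • ξ := by
  intro n
  induction n with
  | zero => intro f c _; simp
  | succ n ih =>
    intro f c h
    rw [List.ofFn_succ, List.prod_cons, mul_smul, ih _ (fun i => c i.succ) (fun i => h i.succ),
      ← mul_smul, ← Algebra.commutes, mul_smul, h 0, ← mul_smul, ← map_mul, Fin.prod_univ_succ,
      mul_comm]

theorem aux_zero {A : Type*} [Ring A] [Algebra ℂ A] {V : Type*} [AddCommGroup V] [Module A V]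
    (ξ : V) : ∀ (n : ℕ) (f : Fin n → A) (c : Fin n → ℂ) (i : Fin n), f i • ξ = 0 →
    (∀ j, i < j → f j • ξ = algebraMap ℂ A (c j) • ξ) →
    (List.ofFn f).prod • ξ = 0 := by
  intro n
  induction n with
  | zero => intro f c i; exact i.elim0
  | succ n ih =>
    intro f c i hi h
    rw [List.ofFn_succ, List.prod_cons, mul_smul]
    induction i using Fin.cases with
    | zero =>
      rw [aux_prod ξ n _ (fun i => c i.succ) (fun i => h i.succ (Fin.succ_pos i)),
        ← mul_smul, ← Algebra.commutes, mul_smul, hi, smul_zero]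
    | succ i =>
      rw [ih _ (fun i => c i.succ) i hi (fun j hj => h j.succ (Fin.succ_lt_succ_iff.mpr hj)),
        smul_zero]

theorem aux_perm {n : ℕ} (σ : Equiv.Perm (Fin n)) (h : σ ≠ 1) :
    ∃ i, σ i < i ∧ ∀ j, i < j → σ j = j := by
  classical
  have hne : (Finset.univ.filter fun i => σ i ≠ i).Nonempty := by
    by_contra hc
    rw [Finset.not_nonempty_iff_eq_empty, Finset.filter_eq_empty_iff] at hc
    exact h (Equiv.ext fun i => by simpa using hc (Finset.mem_univ i))
  obtain ⟨i, hi, hmax⟩ := Finset.exists_max_image _ id hne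
  have hi2 : σ i ≠ i := by simpa using hi
  have hj : ∀ j, i < j → σ j = j := by
    intro j hij
    by_contra hc
    exact absurd (hmax j (by simpa using hc)) (not_le.mpr hij)
  refine ⟨i, lt_of_le_of_ne (not_lt.mp fun hlt => hi2 (σ.injective (hj _ hlt))) hi2, hj⟩

theorem aux_tri (q : ℂ) (n : ℕ) {i j : Fin n} (h : i < j) : lG q n false i j = 0 := by
  rw [lG, RingQuot.mkAlgHom_rel ℂ (relGL.tri_minus h), map_zero]

theorem aux_diag (q : ℂ) (n : ℕ) (i : Fin n) : lG q n true i i * lG q n false i i = 1 := by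
  rw [lG, lG, ← map_mul, RingQuot.mkAlgHom_rel ℂ (relGL.diag_pm i), map_one]

/-- Evaluation of the (evaluated) quantum determinant
`∑_σ (−q)^{−l(σ)} (l⁺_{σ(1)1} − uq^{2n−2}l⁻_{σ(1)1})⋯(l⁺_{σ(n)n} − u l⁻_{σ(n)n})`
on the highest weight vector `ξ` of `L_q(λ)`:
the eigenvalue is `∏_{i=1}^n (q^{−λ_i} − q^{λ_i+2n−2i}u)`. -/
theorem stmt_18 (n : ℕ) (hn : 1 ≤ n) (q : ℂ) (hq0 : q ≠ 0)
    (hq : ∀ k : ℕ, k ≠ 0 → q ^ k ≠ 1)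
    (lam : Fin n → ℤ)
    (V : Type*) [AddCommGroup V] [Module (UqGL q n) V]
    (hirr : IsSimpleModule (UqGL q n) V)
    (ξ : V) (hξ : ξ ≠ 0)
    (hhw1 : ∀ i j : Fin n, i < j → lG q n true i j • ξ = 0)
    (hhw2 : ∀ i : Fin n, lG q n false i i • ξ = algebraMap ℂ (UqGL q n) (q ^ (lam i)) • ξ)
    (u : ℂ) :
    (∑ σ : Equiv.Perm (Fin n),
        ((-q) ^ (-(invCount σ : ℤ))) •
          (List.ofFn fun i : Fin n =>
            lG q n true (σ i) i -
              algebraMap ℂ (UqGL q n) (u * q ^ (2 * ((n : ℤ) - 1 - (i : ℤ)))) *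
                lG q n false (σ i) i).prod) • ξ =
      algebraMap ℂ (UqGL q n)
        (∏ i : Fin n, (q ^ (-(lam i)) - q ^ (lam i + 2 * (n : ℤ) - 2 - 2 * (i : ℤ)) * u)) • ξ := by
  have hplus : ∀ i : Fin n, lG q n true i i • ξ = algebraMap ℂ (UqGL q n) (q ^ (-(lam i))) • ξ := by
    intro i
    have h0 : ξ = algebraMap ℂ (UqGL q n) (q ^ (lam i)) • (lG q n true i i • ξ) := by
      rw [← mul_smul, Algebra.commutes, mul_smul, ← hhw2 i, ← mul_smul, aux_diag, one_smul]
    conv_rhs => rw [h0]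
    rw [← mul_smul, ← map_mul, ← zpow_add₀ hq0, neg_add_cancel, zpow_zero, map_one, one_smul]
  have hdiag : ∀ i : Fin n, (lG q n true i i -
      algebraMap ℂ (UqGL q n) (u * q ^ (2 * ((n : ℤ) - 1 - (i : ℤ)))) * lG q n false i i) • ξ =
      algebraMap ℂ (UqGL q n)
        (q ^ (-(lam i)) - q ^ (lam i + 2 * (n : ℤ) - 2 - 2 * (i : ℤ)) * u) • ξ := by
    intro i
    rw [sub_smul, mul_smul, hhw2, hplus, ← mul_smul, ← map_mul, ← sub_smul, ← map_sub]
    congr 3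
    rw [mul_assoc, ← zpow_add₀ hq0, mul_comm]
    congr 2
    ring
  rw [Finset.sum_smul, Finset.sum_eq_single (1 : Equiv.Perm (Fin n))]
  · have h1 : invCount (1 : Equiv.Perm (Fin n)) = 0 := by
      rw [invCount, Finset.card_eq_zero, Finset.filter_eq_empty_iff]
      intro p _ hp
      exact absurd hp.1 (not_lt.mpr hp.2.le)
    rw [h1, Nat.cast_zero, neg_zero, zpow_zero, one_smul]
    exact aux_prod ξ n _ _ hdiag
  · intro σ _ hσ
    obtain ⟨i, hi, hj⟩ := aux_perm σ hσ
    rw [Algebra.smul_def, mul_smul]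
    rw [aux_zero ξ n _ (fun i => q ^ (-(lam i)) - q ^ (lam i + 2 * (n : ℤ) - 2 - 2 * (i : ℤ)) * u)
      i, smul_zero]
    · rw [aux_tri q n hi, mul_zero, sub_zero, hhw1 _ _ hi]
    · intro j hij
      rw [hj j hij]
      exact hdiag j
  · intro h
    exact absurd (Finset.mem_univ _) h
end
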